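/- Let d ≥ 1 and let u : [0,∞) × ℝ^d → ℝ^d be smooth, ℤ^d-periodic in x, bounded on [0,T] × ℝ^d for every T > 0, and divergence-free in x. Suppose u is relaxation enhancing in the following sense: there is a function τ : (0,∞) → (0,∞) with ν·τ(ν) → 0 as ν → 0⁺ such that for every ν > 0, every s ≥ 0, and every smooth, ℤ^d-periodic-in-x, mean-zero solution θ of ∂_t θ − νΔθ + u·∇θ = 0 on [s,∞) × ℝ^d, one has ‖θ(s+τ(ν),·)‖_{L²} ≤ (1/2)‖θ(s,·)‖_{L²}. Then there exists a smooth, strictly increasing bijection σ : [0,1) → [0,∞) such that for every ν > 0, every s ∈ [0,1), and every smooth, ℤ^d-periodic-in-x, mean-zero solution θ of ∂_t θ − νΔθ + u_σ·∇θ = 0 on [s,1) × ℝ^d, one has ‖θ(t,·)‖_{L²} → 0 as t → 1⁻. -/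

import Mathlib

open Real MeasureTheory Filter

/-- Spatial partial derivative in the `i`-th coordinate direction. -/
noncomputable def pd (d : ℕ) (i : Fin d) (f : (Fin d → ℝ) → ℝ) (x : Fin d → ℝ) : ℝ :=
  fderiv ℝ f x (Pi.single i 1)

/-- Spatial Laplacian: sum of second partial derivatives. -/
noncomputable def lap (d : ℕ) (f : (Fin d → ℝ) → ℝ) (x : Fin d → ℝ) : ℝ :=
  ∑ i, pd d i (fun y => pd d i f y) x

/-- The `L²` norm on the unit cell `[0,1]^d` of a `ℤ^d`-periodic function. -/
noncomputable def L2norm (d : ℕ) (f : (Fin d → ℝ) → ℝ) : ℝ :=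
  Real.sqrt (∫ x in Set.Icc (0 : Fin d → ℝ) 1, (f x) ^ 2)

/-- `ℤ^d`-periodicity. -/
def PeriodicIn (d : ℕ) (f : (Fin d → ℝ) → ℝ) : Prop :=
  ∀ x : Fin d → ℝ, ∀ k : Fin d → ℤ, f (x + fun i => (k i : ℝ)) = f x

/-!
The clock `σ` runs with a huge constant speed `a n` on the `n`-th of a sequence of plateaus that
accumulate at `1`. In the time variable `σ`, a solution for the accelerated flow solves, on that
plateau, the original equation with viscosity `ν / a n`, so its `L²` norm halves within time
`τ (ν / a n)`, that is, within time `τ (ν / a n) / a n` in the variable `t`. Since `ν τ(ν) → 0`, the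
latter is less than the length of the plateau once `a n` is large, locally uniformly in `ν`. As
incompressibility makes the `L²` norm nonincreasing in between, it tends to `0`.

The hypothesis concerns solutions on `[s, ∞)`, whereas a plateau only carries a solution on a
bounded time interval. It therefore has to be continued for all times, that is, the initial value
problem must be solved by smooth functions; the energy estimate gives uniqueness. In Fourier
coefficients the equation is the system `b_k' = -∑ i, (U i * (2πi k_i b))_k - 4π²κ|k|² b_k`, whose
coupling grows only linearly in `k`. After adding a large exponential rate, the damping dominates
the coupling in spaces of rapidly decaying coefficients, and a fixed-point iteration converges.
-/

open Set
open scoped ContDiff Topology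

/-! ### Differentiation on slabs `I × E` and under the integral sign -/

section Slab

variable {E V : Type*} [NormedAddCommGroup E] [NormedSpace ℝ E] [NormedAddCommGroup V]
  [NormedSpace ℝ V] {m n : WithTop ℕ∞} {I J : Set ℝ} {F : ℝ → E → V} {t : ℝ}

/-- Joint `C^n` regularity of a time-dependent function on the slab `I × E`. As in `ContDiffOn`,
derivatives in time are one-sided at those boundary points of `I` that belong to `I`. -/
def ContDiffOnSlab (n : WithTop ℕ∞) (I : Set ℝ) (F : ℝ → E → V) : Prop :=
  ContDiffOn ℝ n (fun p : ℝ × E => F p.1 p.2) (I ×ˢ univ)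

namespace ContDiffOnSlab

theorem mono (hF : ContDiffOnSlab n I F) (h : J ⊆ I) : ContDiffOnSlab n J F :=
  ContDiffOn.mono hF (prod_mono_left h)

theorem of_le (hF : ContDiffOnSlab n I F) (h : m ≤ n) : ContDiffOnSlab m I F :=
  ContDiffOn.of_le hF h

theorem contDiff_slice (hF : ContDiffOnSlab n I F) (ht : t ∈ I) : ContDiff ℝ n (F t) := by
  rw [← contDiffOn_univ]
  exact ContDiffOn.comp (g := fun p : ℝ × E => F p.1 p.2) hF (contDiff_prodMk_right t).contDiffOn
    fun x _ => ⟨ht, mem_univ x⟩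

theorem comp_time (hF : ContDiffOnSlab n I F) {g : ℝ → ℝ} (hg : ContDiffOn ℝ n g J)
    (hgI : MapsTo g J I) : ContDiffOnSlab n J fun t => F (g t) :=
  ContDiffOn.comp (g := fun p : ℝ × E => F p.1 p.2) (f := fun p : ℝ × E => (g p.1, p.2)) hF
    ((hg.comp contDiffOn_fst fun _ hp => hp.1).prodMk contDiffOn_snd)
    fun p hp => ⟨hgI hp.1, mem_univ p.2⟩

theorem hasFDerivWithinAt (hF : ContDiffOnSlab n I F) (hn : n ≠ 0) (ht : t ∈ I) (x : E) :
    HasFDerivWithinAt (fun p : ℝ × E => F p.1 p.2)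
      (fderivWithin ℝ (fun p : ℝ × E => F p.1 p.2) (I ×ˢ univ) (t, x)) (I ×ˢ univ) (t, x) :=
  ((hF (t, x) ⟨ht, mem_univ x⟩).differentiableWithinAt hn).hasFDerivWithinAt

theorem hasDerivWithinAt_time (hF : ContDiffOnSlab n I F) (hn : n ≠ 0) (ht : t ∈ I) (x : E) :
    HasDerivWithinAt (fun r => F r x)
      (fderivWithin ℝ (fun p : ℝ × E => F p.1 p.2) (I ×ˢ univ) (t, x) (1, 0)) I t :=
  (hF.hasFDerivWithinAt hn ht x).comp_hasDerivWithinAt (f := fun r => (r, x)) (t := I ×ˢ univ) t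
    ((hasDerivWithinAt_id t I).prodMk (hasDerivWithinAt_const t I x))
    fun _ hr => ⟨hr, mem_univ x⟩

theorem differentiableWithinAt_time (hF : ContDiffOnSlab n I F) (hn : n ≠ 0) (ht : t ∈ I) (x : E) :
    DifferentiableWithinAt ℝ (fun r => F r x) I t :=
  (hF.hasDerivWithinAt_time hn ht x).differentiableWithinAt

theorem fderiv_slice_apply (hF : ContDiffOnSlab n I F) (hn : n ≠ 0) (ht : t ∈ I) (x v : E) :
    fderiv ℝ (F t) x v =
      fderivWithin ℝ (fun p : ℝ × E => F p.1 p.2) (I ×ˢ univ) (t, x) (0, v) := by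
  have h := ((hF.hasFDerivWithinAt hn ht x).comp x (hasFDerivAt_prodMk_right t x).hasFDerivWithinAt
    (s := univ) fun y _ => ⟨ht, mem_univ y⟩).hasFDerivAt univ_mem
  exact (DFunLike.congr_fun h.fderiv v).trans (by simp)

theorem continuousOn_derivWithin_time (hF : ContDiffOnSlab 1 I F) (hI : UniqueDiffOn ℝ I) :
    ContinuousOn (fun p : ℝ × E => derivWithin (fun r => F r p.2) I p.1) (I ×ˢ univ) :=
  ((ContDiffOn.continuousOn_fderivWithin hF (hI.prod uniqueDiffOn_univ) le_rfl).clm_apply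
    continuousOn_const).congr fun p hp =>
      (hF.hasDerivWithinAt_time one_ne_zero hp.1 p.2).derivWithin (hI p.1 hp.1)

theorem derivWithin_time (hF : ContDiffOnSlab ∞ I F) (hI : UniqueDiffOn ℝ I) :
    ContDiffOnSlab ∞ I fun t x => derivWithin (fun r => F r x) I t :=
  ((ContDiffOn.fderivWithin hF (hI.prod uniqueDiffOn_univ) (m := ∞) le_rfl).clm_apply
    contDiffOn_const).congr fun p hp =>
      (hF.hasDerivWithinAt_time (by simp) hp.1 p.2).derivWithin (hI p.1 hp.1)

theorem fderiv_apply (hF : ContDiffOnSlab ∞ I F) (hI : UniqueDiffOn ℝ I) (v : E) :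
    ContDiffOnSlab ∞ I fun t x => fderiv ℝ (F t) x v :=
  ((ContDiffOn.fderivWithin hF (hI.prod uniqueDiffOn_univ) (m := ∞) le_rfl).clm_apply
    contDiffOn_const).congr fun p hp => hF.fderiv_slice_apply (by simp) hp.1 p.2 v

end ContDiffOnSlab

theorem hasDerivWithinAt_integral_of_dominated {α : Type*} [MeasurableSpace α] {μ : Measure α}
    {F F' : ℝ → α → V} {bound : α → ℝ} (hI : Convex ℝ I) (ht : t ∈ I)
    (hF : ∀ r ∈ I, Integrable (F r) μ)
    (hF' : ∀ᵐ x ∂μ, ∀ r ∈ I, HasDerivWithinAt (fun r => F r x) (F' r x) I r)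
    (hbound : ∀ᵐ x ∂μ, ∀ r ∈ I, ‖F' r x‖ ≤ bound x) (hint : Integrable bound μ) :
    HasDerivWithinAt (fun r => ∫ x, F r x ∂μ) (∫ x, F' t x ∂μ) I t := by
  have hnear : ∀ᶠ r in 𝓝[I \ {t}] t, r ∈ I \ {t} := self_mem_nhdsWithin
  have hslope : Tendsto (fun r => ∫ x, slope (fun r => F r x) t r ∂μ) (𝓝[I \ {t}] t)
      (𝓝 (∫ x, F' t x ∂μ)) := by
    refine tendsto_integral_filter_of_dominated_convergence bound ?_ ?_ hint ?_
    · filter_upwards [hnear] with r hr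
      simp only [slope_def_module]
      exact (((hF r hr.1).sub (hF t ht)).smul _).aestronglyMeasurable
    · filter_upwards [hnear] with r hr
      filter_upwards [hF', hbound] with x hderiv hle
      have hlip := hI.norm_image_sub_le_of_norm_hasDerivWithin_le hderiv hle ht hr.1
      rw [slope_def_module, norm_smul, norm_inv,
        inv_mul_le_iff₀ (norm_pos_iff.2 (sub_ne_zero.2 hr.2)), mul_comm]
      exact hlip
    · filter_upwards [hF'] with x hderiv
      exact hasDerivWithinAt_iff_tendsto_slope.1 (hderiv t ht)
  refine hasDerivWithinAt_iff_tendsto_slope.2 (hslope.congr' ?_)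
  filter_upwards [hnear] with r hr
  simp only [slope_def_module]
  rw [integral_smul, integral_sub (hF r hr.1) (hF t ht)]

theorem ContDiffOnSlab.hasDerivWithinAt_setIntegral [MeasurableSpace E] [OpensMeasurableSpace E]
    {μ : Measure E} [IsFiniteMeasureOnCompacts μ] (hF : ContDiffOnSlab 1 I F) (hI : Convex ℝ I)
    (hIc : IsClosed I) (hIu : UniqueDiffOn ℝ I) {K : Set E} (hK : IsCompact K) (ht : t ∈ I) :
    HasDerivWithinAt (fun r => ∫ x in K, F r x ∂μ)
      (∫ x in K, derivWithin (fun r => F r x) I t ∂μ) I t := by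
  set B := I ∩ Metric.closedBall t 1
  obtain ⟨C, hC⟩ :=
    (((isCompact_closedBall t 1).inter_left hIc).prod hK).exists_bound_of_continuousOn
    ((hF.continuousOn_derivWithin_time hIu).mono (prod_mono inter_subset_left (subset_univ K)))
  have hB : HasDerivWithinAt (fun r => ∫ x in K, F r x ∂μ)
      (∫ x in K, derivWithin (fun r => F r x) I t ∂μ) B t := by
    refine hasDerivWithinAt_integral_of_dominated (bound := fun _ => C)
      (F' := fun r x => derivWithin (fun r => F r x) I r)
      (hI.inter (convex_closedBall t 1)) ⟨ht, Metric.mem_closedBall_self zero_le_one⟩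
      (fun r hr => (hF.contDiff_slice hr.1).continuous.continuousOn.integrableOn_compact' hK
        hK.measurableSet)
      (ae_of_all _ fun x r hr => (hF.differentiableWithinAt_time one_ne_zero hr.1
        x).hasDerivWithinAt.mono inter_subset_left) ?_ ?_
    · exact (ae_restrict_iff' hK.measurableSet).2
        (ae_of_all _ fun x hx r hr => hC (r, x) ⟨hr, hx⟩)
    · exact integrableOn_const hK.measure_ne_top
  exact hB.mono_of_mem_nhdsWithin
    (inter_mem_nhdsWithin I (Metric.closedBall_mem_nhds t one_pos))

end Slab

/-! ### Functions periodic with respect to `ℤ^ι` -/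

section Cell

variable {ι X V : Type*} [NormedAddCommGroup V] [NormedSpace ℝ V]

/-- `ℤ^ι`-periodicity of a function with values in an arbitrary type; `PeriodicIn` is the
case of real-valued functions on `ℝ^d`. -/
def LatticePeriodic (f : (ι → ℝ) → X) : Prop :=
  ∀ (x : ι → ℝ) (k : ι → ℤ), f (x + fun i => (k i : ℝ)) = f x

theorem LatticePeriodic.map {Y : Type*} {f : (ι → ℝ) → X} (hf : LatticePeriodic f) (g : X → Y) :
    LatticePeriodic fun x => g (f x) :=
  fun x k => congrArg g (hf x k)

theorem LatticePeriodic.map₂ {Y Z : Type*} {f : (ι → ℝ) → X} {f' : (ι → ℝ) → Y}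
    (hf : LatticePeriodic f) (hf' : LatticePeriodic f') (g : X → Y → Z) :
    LatticePeriodic fun x => g (f x) (f' x) :=
  fun x k => congrArg₂ g (hf x k) (hf' x k)

theorem LatticePeriodic.fderiv_apply [Finite ι] {f : (ι → ℝ) → V} (hf : LatticePeriodic f)
    (v : ι → ℝ) : LatticePeriodic fun x => fderiv ℝ f x v := fun x k => by
  have := Fintype.ofFinite ι
  have hshift : (fun y => f (y + fun i => (k i : ℝ))) = f := funext fun y => hf y k
  exact congrArg (· v) ((fderiv_comp_add_right _).symm.trans (congrArg (fderiv ℝ · x) hshift))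

theorem LatticePeriodic.eq_apply_fract {f : (ι → ℝ) → X} (hf : LatticePeriodic f) (x : ι → ℝ) :
    f x = f fun i => Int.fract (x i) := by
  rw [← hf (fun i => Int.fract (x i)) fun i => ⌊x i⌋]
  exact congrArg f (funext fun i => (Int.fract_add_floor (x i)).symm)

theorem LatticePeriodic.ext_of_eqOn_Icc {f g : (ι → ℝ) → X} (hf : LatticePeriodic f)
    (hg : LatticePeriodic g) (h : EqOn f g (Icc 0 1)) : f = g := by
  funext x
  rw [hf.eq_apply_fract, hg.eq_apply_fract]
  exact h ⟨fun i => Int.fract_nonneg (x i), fun i => (Int.fract_lt_one (x i)).le⟩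

theorem LatticePeriodic.exists_torus_lift {f : (ι → ℝ) → X} (hf : LatticePeriodic f) :
    ∃ g : UnitAddTorus ι → X, ∀ x : ι → ℝ, g (fun i => (x i : UnitAddCircle)) = f x := by
  refine ⟨fun y => f fun i => AddCircle.equivIco 1 0 (y i), fun x => ?_⟩
  rw [hf.eq_apply_fract x]
  simp only [AddCircle.coe_equivIco_mk_apply, div_one, mul_one]

variable [Fintype ι]

theorem setOf_forall_mem_Ioc_ae_eq_Icc (a : ι → ℝ) :
    {x : ι → ℝ | ∀ i, x i ∈ Ioc (a i) (a i + 1)} =ᵐ[volume] Icc a (a + 1) := by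
  have h : {x : ι → ℝ | ∀ i, x i ∈ Ioc (a i) (a i + 1)} =
      univ.pi fun i => Ioc (a i) ((a + 1) i) := by ext; simp
  exact h ▸ Measure.univ_pi_Ioc_ae_eq_Icc (μ := fun _ : ι => (volume : Measure ℝ))

theorem LatticePeriodic.integral_Icc_add {f : (ι → ℝ) → V} (hf : LatticePeriodic f) (a : ι → ℝ) :
    ∫ x in Icc 0 1, f (x + a) = ∫ x in Icc 0 1, f x := by
  obtain ⟨g, hg⟩ := hf.exists_torus_lift
  have hcell : ∫ x in Icc a (a + 1), f x = ∫ x in Icc 0 1, f x := by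
    have h := (UnitAddTorus.integral_preimage g a).symm.trans (UnitAddTorus.integral_preimage g 0)
    simp only [hg] at h
    rwa [setIntegral_congr_set (setOf_forall_mem_Ioc_ae_eq_Icc a),
      setIntegral_congr_set (setOf_forall_mem_Ioc_ae_eq_Icc 0), zero_add] at h
  have hpre : (fun x => x + a) ⁻¹' Icc a (a + 1) = Icc 0 1 := by
    simp [add_comm a]
  rw [← hpre, (measurePreserving_add_right volume a).setIntegral_preimage_emb
    (measurableEmbedding_addRight a) f, hcell, hpre]

theorem LatticePeriodic.integral_Icc_fderiv_apply {f : (ι → ℝ) → V} (hper : LatticePeriodic f)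
    (hf : ContDiff ℝ 1 f) (v : ι → ℝ) : ∫ x in Icc 0 1, fderiv ℝ f x v = 0 := by
  have hF : ContDiffOnSlab 1 univ fun (r : ℝ) (x : ι → ℝ) => f (x + r • v) :=
    ContDiff.contDiffOn (f := fun p : ℝ × (ι → ℝ) => f (p.2 + p.1 • v)) (by fun_prop)
  have hderiv := hF.hasDerivWithinAt_setIntegral (μ := volume) convex_univ isClosed_univ
    uniqueDiffOn_univ (isCompact_Icc (a := 0) (b := 1)) (mem_univ 0)
  have hline (x : ι → ℝ) : HasDerivAt (fun r : ℝ => f (x + r • v)) (fderiv ℝ f x v) 0 :=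
    (hf.differentiable one_ne_zero x).hasFDerivAt.hasLineDerivAt v
  simp only [hper.integral_Icc_add, derivWithin_univ, (hline _).deriv] at hderiv
  exact (hderiv.hasDerivAt univ_mem).unique (hasDerivAt_const _ _)

end Cell

theorem LatticePeriodic.eq_zero_of_integral_sq_eq_zero {ι : Type*} [Fintype ι] {f : (ι → ℝ) → ℝ}
    (hper : LatticePeriodic f) (hf : Continuous f) (h : ∫ x in Icc 0 1, f x ^ 2 = 0) : f = 0 := by
  have hae : f =ᵐ[volume.restrict (Icc 0 1)] 0 := by
    have hint : IntegrableOn (fun x => f x ^ 2) (Icc 0 1) :=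
      (hf.pow 2).continuousOn.integrableOn_compact isCompact_Icc
    filter_upwards [(integral_eq_zero_iff_of_nonneg (fun x => sq_nonneg (f x)) hint).1 h]
      with x hx using pow_eq_zero_iff two_ne_zero |>.1 hx
  have hcell : Icc (0 : ι → ℝ) 1 ⊆ closure (interior (Icc 0 1)) := by
    rw [← pi_univ_Icc, interior_pi_set finite_univ, closure_pi_set]
    exact pi_mono fun i _ => by simp
  exact hper.ext_of_eqOn_Icc (fun _ _ => rfl)
    (Measure.eqOn_of_ae_eq hae hf.continuousOn continuousOn_const hcell)

/-! ### The energy method for advection–diffusion equations -/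

section Energy

variable {d : ℕ} {f g : (Fin d → ℝ) → ℝ} {v : (Fin d → ℝ) → Fin d → ℝ}

theorem PeriodicIn.latticePeriodic (hf : PeriodicIn d f) : LatticePeriodic f :=
  hf

theorem periodicIn_pd (hf : PeriodicIn d f) (i : Fin d) : PeriodicIn d (pd d i f) :=
  hf.latticePeriodic.fderiv_apply (Pi.single i 1)

theorem PeriodicIn.mul (hf : PeriodicIn d f) (hg : PeriodicIn d g) :
    PeriodicIn d fun x => f x * g x :=
  hf.latticePeriodic.map₂ hg.latticePeriodic (· * ·)

theorem PeriodicIn.integral_pd (hper : PeriodicIn d f) (hf : ContDiff ℝ 1 f) (i : Fin d) :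
    ∫ x in Icc 0 1, pd d i f x = 0 :=
  hper.latticePeriodic.integral_Icc_fderiv_apply hf (Pi.single i 1)

theorem contDiff_pd {m n : WithTop ℕ∞} (hf : ContDiff ℝ n f) (hmn : m + 1 ≤ n) (i : Fin d) :
    ContDiff ℝ m (pd d i f) :=
  (hf.fderiv_right hmn).clm_apply contDiff_const

theorem continuous_pd (hf : ContDiff ℝ 1 f) (i : Fin d) : Continuous (pd d i f) :=
  (contDiff_pd hf (m := 0) (by simp) i).continuous

theorem pd_mul (hf : Differentiable ℝ f) (hg : Differentiable ℝ g) (i : Fin d) (x : Fin d → ℝ) :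
    pd d i (fun y => f y * g y) x = pd d i f x * g x + f x * pd d i g x := by
  simp only [pd, fderiv_fun_mul (hf x) (hg x), add_apply, smul_apply, smul_eq_mul]
  ring

theorem pd_sub (hf : Differentiable ℝ f) (hg : Differentiable ℝ g) (i : Fin d) (x : Fin d → ℝ) :
    pd d i (fun y => f y - g y) x = pd d i f x - pd d i g x := by
  simp only [pd, fderiv_fun_sub (hf x) (hg x), sub_apply]

theorem lap_sub (hf : ContDiff ℝ 2 f) (hg : ContDiff ℝ 2 g) (x : Fin d → ℝ) :
    lap d (fun y => f y - g y) x = lap d f x - lap d g x := by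
  have hdiff {h : (Fin d → ℝ) → ℝ} (hh : ContDiff ℝ 2 h) (i : Fin d) :
      Differentiable ℝ (pd d i h) :=
    (contDiff_pd hh (m := 1) (by norm_num) i).differentiable one_ne_zero
  simp only [lap, pd_sub (hf.differentiable two_ne_zero) (hg.differentiable two_ne_zero),
    pd_sub (hdiff hf _) (hdiff hg _), Finset.sum_sub_distrib]

theorem PeriodicIn.integral_lap (hper : PeriodicIn d f) (hf : ContDiff ℝ 2 f) :
    ∫ x in Icc 0 1, lap d f x = 0 := by
  have hpd (i : Fin d) : ContDiff ℝ 1 (pd d i f) := contDiff_pd hf (by norm_num) i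
  simp only [lap]
  rw [integral_finsetSum _ fun i _ => (continuous_pd (hpd i) i).integrableOn_Icc]
  exact Finset.sum_eq_zero fun i _ => (periodicIn_pd hper i).integral_pd (hpd i) i

theorem PeriodicIn.integral_mul_lap (hper : PeriodicIn d f) (hf : ContDiff ℝ 2 f) :
    ∫ x in Icc 0 1, f x * lap d f x = -∑ i, ∫ x in Icc 0 1, pd d i f x ^ 2 := by
  have hf1 : ContDiff ℝ 1 f := hf.of_le one_le_two
  have hpd (i : Fin d) : ContDiff ℝ 1 (pd d i f) := contDiff_pd hf (by norm_num) i
  have hparts (x : Fin d → ℝ) : f x * lap d f x =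
      ∑ i, (pd d i (fun y => f y * pd d i f y) x - pd d i f x ^ 2) := by
    rw [lap, Finset.mul_sum]
    refine Finset.sum_congr rfl fun i _ => ?_
    rw [pd_mul (hf1.differentiable one_ne_zero) ((hpd i).differentiable one_ne_zero)]
    ring
  have hflux (i : Fin d) :
      IntegrableOn (fun x => pd d i (fun y => f y * pd d i f y) x) (Icc 0 1) :=
    (continuous_pd (hf1.mul (hpd i)) i).integrableOn_Icc
  have hsq (i : Fin d) : IntegrableOn (fun x => pd d i f x ^ 2) (Icc 0 1) :=
    ((hpd i).continuous.pow 2).integrableOn_Icc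
  have hterm (i : Fin d) : IntegrableOn
      (fun x => pd d i (fun y => f y * pd d i f y) x - pd d i f x ^ 2) (Icc 0 1) :=
    (hflux i).sub (hsq i)
  simp only [hparts]
  rw [integral_finsetSum _ fun i _ => hterm i, ← Finset.sum_neg_distrib]
  refine Finset.sum_congr rfl fun i _ => ?_
  rw [integral_sub (hflux i) (hsq i),
    (hper.mul (periodicIn_pd hper i)).integral_pd (hf1.mul (hpd i)) i,
    zero_sub]

/-- The transport term `v · ∇f`. -/
noncomputable def advection (v : (Fin d → ℝ) → Fin d → ℝ) (f : (Fin d → ℝ) → ℝ)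
    (x : Fin d → ℝ) : ℝ :=
  ∑ i, v x i * pd d i f x

/-- A `C¹`, `ℤ^d`-periodic, divergence-free vector field on `ℝ^d`. -/
structure IncompressibleField (v : (Fin d → ℝ) → Fin d → ℝ) : Prop where
  contDiff : ContDiff ℝ 1 v
  periodic : ∀ i, PeriodicIn d fun x => v x i
  div_eq_zero : ∀ x, ∑ i, pd d i (fun y => v y i) x = 0

namespace IncompressibleField

theorem const_smul (hv : IncompressibleField v) (c : ℝ) :
    IncompressibleField fun x => c • v x where
  contDiff := hv.contDiff.const_smul c
  periodic i := (hv.periodic i).latticePeriodic.map (c * ·)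
  div_eq_zero x := by
    have hcomp (i : Fin d) : DifferentiableAt ℝ (fun y => v y i) x :=
      (contDiff_pi.1 hv.contDiff i).differentiable one_ne_zero x
    have h := hv.div_eq_zero x
    simp only [pd] at h
    simp only [pd, Pi.smul_apply, fderiv_fun_const_smul (hcomp _), smul_apply]
    rw [← Finset.smul_sum, h, smul_zero]

theorem integral_advection (hv : IncompressibleField v) (hper : PeriodicIn d f)
    (hf : ContDiff ℝ 1 f) : ∫ x in Icc 0 1, advection v f x = 0 := by
  have hcomp := contDiff_pi.1 hv.contDiff
  have hdiv (x : Fin d → ℝ) : advection v f x = ∑ i, pd d i (fun y => v y i * f y) x := by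
    simp only [advection, pd_mul ((hcomp _).differentiable one_ne_zero)
      (hf.differentiable one_ne_zero)]
    rw [Finset.sum_add_distrib, ← Finset.sum_mul, hv.div_eq_zero, zero_mul, zero_add]
  simp only [hdiv]
  rw [integral_finsetSum _ fun i _ => (continuous_pd ((hcomp i).mul hf) i).integrableOn_Icc]
  exact Finset.sum_eq_zero fun i _ =>
    ((hv.periodic i).mul hper).integral_pd ((hcomp i).mul hf) i

theorem integral_mul_advection (hv : IncompressibleField v) (hper : PeriodicIn d f)
    (hf : ContDiff ℝ 1 f) : ∫ x in Icc 0 1, f x * advection v f x = 0 := by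
  have hfd := hf.differentiable one_ne_zero
  have hsq (x : Fin d → ℝ) : advection v (fun y => f y * f y) x = 2 * (f x * advection v f x) := by
    simp only [advection, pd_mul hfd hfd, Finset.mul_sum]
    exact Finset.sum_congr rfl fun i _ => by ring
  have h := hv.integral_advection (hper.mul hper) (hf.mul hf)
  simp only [hsq, integral_const_mul] at h
  simpa using h

theorem continuous_advection (hv : IncompressibleField v) (hf : ContDiff ℝ 1 f) :
    Continuous (advection v f) :=
  continuous_finsetSum _ fun i _ =>
    (contDiff_pi.1 hv.contDiff i).continuous.mul (continuous_pd hf i)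

end IncompressibleField

theorem continuous_lap (hf : ContDiff ℝ 2 f) : Continuous (lap d f) :=
  continuous_finsetSum _ fun i _ =>
    continuous_pd (contDiff_pd hf (by norm_num) i) i

/-- `θ` is a smooth, `ℤ^d`-periodic solution of `∂_t θ - κ Δθ + v · ∇θ = 0` for times in `I`. -/
structure IsAdvectionDiffusion (I : Set ℝ) (κ : ℝ) (v : ℝ → (Fin d → ℝ) → Fin d → ℝ)
    (θ : ℝ → (Fin d → ℝ) → ℝ) : Prop where
  contDiffOnSlab : ContDiffOnSlab ∞ I θ
  periodic : ∀ t ∈ I, PeriodicIn d (θ t)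
  equation : ∀ t ∈ I, ∀ x,
    derivWithin (fun r => θ r x) I t - κ * lap d (θ t) x + advection (v t) (θ t) x = 0

namespace IsAdvectionDiffusion

variable {I J : Set ℝ} {κ s t : ℝ} {v : ℝ → (Fin d → ℝ) → Fin d → ℝ}
  {θ θ₁ θ₂ : ℝ → (Fin d → ℝ) → ℝ}

theorem contDiff_two (h : IsAdvectionDiffusion I κ v θ) (ht : t ∈ I) : ContDiff ℝ 2 (θ t) :=
  (h.contDiffOnSlab.contDiff_slice ht).of_le ENat.LEInfty.out

theorem derivWithin_eq (h : IsAdvectionDiffusion I κ v θ) (ht : t ∈ I) (x : Fin d → ℝ) :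
    derivWithin (fun r => θ r x) I t = κ * lap d (θ t) x - advection (v t) (θ t) x := by
  linarith [h.equation t ht x]

theorem mono (h : IsAdvectionDiffusion I κ v θ) (hJI : J ⊆ I) (hJ : UniqueDiffOn ℝ J) :
    IsAdvectionDiffusion J κ v θ where
  contDiffOnSlab := h.contDiffOnSlab.mono hJI
  periodic t ht := h.periodic t (hJI ht)
  equation t ht x := by
    rw [derivWithin_subset hJI (hJ t ht)
      (h.contDiffOnSlab.differentiableWithinAt_time (by simp) (hJI ht) x)]
    exact h.equation t (hJI ht) x

theorem sub (h₁ : IsAdvectionDiffusion I κ v θ₁) (h₂ : IsAdvectionDiffusion I κ v θ₂) :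
    IsAdvectionDiffusion I κ v fun t x => θ₁ t x - θ₂ t x where
  contDiffOnSlab := ContDiffOn.sub h₁.contDiffOnSlab h₂.contDiffOnSlab
  periodic t ht :=
    (h₁.periodic t ht).latticePeriodic.map₂ (h₂.periodic t ht).latticePeriodic (· - ·)
  equation t ht x := by
    have hd₁ := (h₁.contDiff_two ht).differentiable two_ne_zero
    have hd₂ := (h₂.contDiff_two ht).differentiable two_ne_zero
    rw [derivWithin_fun_sub (h₁.contDiffOnSlab.differentiableWithinAt_time (by simp) ht x)
      (h₂.contDiffOnSlab.differentiableWithinAt_time (by simp) ht x),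
      lap_sub (h₁.contDiff_two ht) (h₂.contDiff_two ht)]
    simp only [advection, pd_sub hd₁ hd₂, mul_sub, Finset.sum_sub_distrib]
    have e₁ := h₁.equation t ht x
    have e₂ := h₂.equation t ht x
    simp only [advection] at e₁ e₂
    linear_combination e₁ - e₂

theorem integral_eq (h : IsAdvectionDiffusion I κ v θ) (hI : Convex ℝ I) (hIc : IsClosed I)
    (hIu : UniqueDiffOn ℝ I) (hv : ∀ t ∈ I, IncompressibleField (v t)) (hs : s ∈ I) (ht : t ∈ I) :
    ∫ x in Icc 0 1, θ t x = ∫ x in Icc 0 1, θ s x := by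
  have hderiv (r : ℝ) (hr : r ∈ I) :
      HasDerivWithinAt (fun r => ∫ x in Icc 0 1, θ r x) 0 I r := by
    have hf := h.contDiff_two hr
    have hderiv := (h.contDiffOnSlab.of_le ENat.LEInfty.out).hasDerivWithinAt_setIntegral
      (μ := volume) hI hIc hIu (isCompact_Icc (a := 0) (b := 1)) hr
    simp only [h.derivWithin_eq hr] at hderiv
    rwa [integral_sub ((continuous_lap hf).const_mul κ).integrableOn_Icc
        ((hv r hr).continuous_advection (hf.of_le one_le_two)).integrableOn_Icc,
      integral_const_mul, (h.periodic r hr).integral_lap hf,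
      (hv r hr).integral_advection (h.periodic r hr) (hf.of_le one_le_two), mul_zero,
      sub_zero] at hderiv
  simpa [sub_eq_zero] using
    hI.norm_image_sub_le_of_norm_hasDerivWithin_le (C := 0) hderiv (by simp) hs ht

theorem integral_mul_derivWithin_nonpos (h : IsAdvectionDiffusion I κ v θ) (hκ : 0 ≤ κ)
    (hv : IncompressibleField (v t)) (ht : t ∈ I) :
    ∫ x in Icc 0 1, θ t x * derivWithin (fun r => θ r x) I t ≤ 0 := by
  have hf := h.contDiff_two ht
  have hdiffusion : IntegrableOn (fun x => κ * (θ t x * lap d (θ t) x)) (Icc 0 1) :=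
    ((hf.continuous.mul (continuous_lap hf)).const_mul κ).integrableOn_Icc
  have htransport : IntegrableOn (fun x => θ t x * advection (v t) (θ t) x) (Icc 0 1) :=
    (hf.continuous.mul (hv.continuous_advection (hf.of_le one_le_two))).integrableOn_Icc
  simp only [h.derivWithin_eq ht, mul_sub, mul_left_comm _ κ]
  rw [integral_sub hdiffusion htransport, integral_const_mul, (h.periodic t ht).integral_mul_lap hf,
    hv.integral_mul_advection (h.periodic t ht) (hf.of_le one_le_two), sub_zero]
  exact mul_nonpos_of_nonneg_of_nonpos hκ (neg_nonpos.2 (Finset.sum_nonneg fun i _ =>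
    integral_nonneg fun x => sq_nonneg _))

theorem antitoneOn_integral_sq (h : IsAdvectionDiffusion I κ v θ) (hI : Convex ℝ I)
    (hIc : IsClosed I) (hIu : UniqueDiffOn ℝ I) (hκ : 0 ≤ κ)
    (hv : ∀ t ∈ I, IncompressibleField (v t)) :
    AntitoneOn (fun t => ∫ x in Icc 0 1, θ t x ^ 2) I := by
  have hsq : ContDiffOnSlab 1 I fun t x => θ t x ^ 2 :=
    (ContDiffOn.pow h.contDiffOnSlab 2).of_le ENat.LEInfty.out
  have hderiv (t : ℝ) (ht : t ∈ I) := hsq.hasDerivWithinAt_setIntegral (μ := volume) hI hIc hIu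
    (isCompact_Icc (a := 0) (b := 1)) ht
  refine antitoneOn_of_hasDerivWithinAt_nonpos hI (fun t ht => (hderiv t ht).continuousWithinAt)
    (fun t ht => (hderiv t (interior_subset ht)).mono interior_subset) fun t ht => ?_
  have ht := interior_subset ht
  have hchain (x : Fin d → ℝ) : derivWithin (fun r => θ r x ^ 2) I t =
      2 * (θ t x * derivWithin (fun r => θ r x) I t) := by
    rw [derivWithin_fun_pow (h.contDiffOnSlab.differentiableWithinAt_time (by simp) ht x)]
    ring
  simp only [hchain, integral_const_mul]
  linarith [h.integral_mul_derivWithin_nonpos hκ (hv t ht) ht]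

theorem antitoneOn_L2norm (h : IsAdvectionDiffusion I κ v θ) (hI : Convex ℝ I) (hIc : IsClosed I)
    (hIu : UniqueDiffOn ℝ I) (hκ : 0 ≤ κ) (hv : ∀ t ∈ I, IncompressibleField (v t)) :
    AntitoneOn (fun t => L2norm d (θ t)) I :=
  fun _ hs _ ht hst =>
  Real.sqrt_le_sqrt (h.antitoneOn_integral_sq hI hIc hIu hκ hv hs ht hst)

theorem eq_of_eq (h₁ : IsAdvectionDiffusion I κ v θ₁) (h₂ : IsAdvectionDiffusion I κ v θ₂)
    (hI : Convex ℝ I) (hIc : IsClosed I) (hIu : UniqueDiffOn ℝ I) (hκ : 0 ≤ κ)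
    (hv : ∀ t ∈ I, IncompressibleField (v t)) (hs : s ∈ I) (ht : t ∈ I) (hst : s ≤ t)
    (heq : θ₁ s = θ₂ s) : θ₁ t = θ₂ t := by
  have h := h₁.sub h₂
  have hle := h.antitoneOn_integral_sq hI hIc hIu hκ hv hs ht hst
  simp only [heq, sub_self, ne_eq, OfNat.ofNat_ne_zero, not_false_eq_true, zero_pow,
    integral_zero] at hle
  have hzero := (h.periodic t ht).latticePeriodic.eq_zero_of_integral_sq_eq_zero
    (h.contDiff_two ht).continuous (hle.antisymm (integral_nonneg fun x => sq_nonneg _))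
  exact funext fun x => sub_eq_zero.1 (congrFun hzero x)

end IsAdvectionDiffusion

end Energy

/-! ### Term-by-term differentiation on sets with boundary -/

section Series

variable {α E V : Type*} [NormedAddCommGroup V]

theorem Icc_add_one_mem_nhdsWithin_Ici (s t : ℝ) : Icc s (t + 1) ∈ 𝓝[Ici s] t := by
  rw [← Ici_inter_Iic]
  exact inter_mem_nhdsWithin _ (Iic_mem_nhds (lt_add_one t))

theorem continuousOn_tsum_Ici [CompleteSpace V] {s : ℝ} {f : α → ℝ → V}
    (hf : ∀ a, ContinuousOn (f a) (Ici s))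
    (hb : ∀ T, ∃ u : α → ℝ, Summable u ∧ ∀ t ∈ Icc s T, ∀ a, ‖f a t‖ ≤ u a) :
    ContinuousOn (fun t => ∑' a, f a t) (Ici s) := by
  intro t ht
  obtain ⟨u, hu, hfu⟩ := hb (t + 1)
  have h : ContinuousOn (fun t => ∑' a, f a t) (Icc s (t + 1)) :=
    continuousOn_tsum (fun a => (hf a).mono Icc_subset_Ici_self) hu fun a r hr => hfu r hr a
  exact (h t ⟨ht, (lt_add_one t).le⟩).mono_of_mem_nhdsWithin (Icc_add_one_mem_nhdsWithin_Ici s t)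

variable [NormedAddCommGroup E] [NormedSpace ℝ E] [NormedSpace ℝ V]

theorem norm_sub_sub_fderivWithin_apply_le {S : Set E} (hS : Convex ℝ S) {f : E → V}
    {f' : E → E →L[ℝ] V} {C : ℝ} (hf : ∀ x ∈ S, HasFDerivWithinAt f (f' x) S x)
    (hC : ∀ x ∈ S, ‖f' x‖ ≤ C) {x y : E} (hx : x ∈ S) (hy : y ∈ S) :
    ‖f y - f x - f' x (y - x)‖ ≤ 2 * C * ‖y - x‖ :=
  calc ‖f y - f x - f' x (y - x)‖ ≤ ‖f y - f x‖ + ‖f' x (y - x)‖ := norm_sub_le _ _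
    _ ≤ C * ‖y - x‖ + C * ‖y - x‖ :=
        add_le_add (hS.norm_image_sub_le_of_norm_hasFDerivWithin_le hf hC hx hy)
          ((f' x).le_of_opNorm_le (hC x hx) _)
    _ = 2 * C * ‖y - x‖ := by ring

variable [CompleteSpace V]

theorem hasFDerivWithinAt_tsum_of_convex {S : Set E} (hS : Convex ℝ S) {f : α → E → V}
    {f' : α → E → E →L[ℝ] V} {u : α → ℝ} (hu : Summable u)
    (hf : ∀ a, ∀ x ∈ S, HasFDerivWithinAt (f a) (f' a x) S x)
    (hb : ∀ a, ∀ x ∈ S, ‖f' a x‖ ≤ u a) (hs : ∀ x ∈ S, Summable fun a => f a x)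
    {x : E} (hx : x ∈ S) :
    HasFDerivWithinAt (fun y => ∑' a, f a y) (∑' a, f' a x) S x := by
  have hf'x : Summable fun a => f' a x := .of_norm_bounded hu fun a => hb a x hx
  set g : α → E → V := fun a y => ‖y - x‖⁻¹ • (f a y - f a x - f' a x (y - x)) with hg
  have hgtends : Tendsto (fun y => ∑' a, g a y) (𝓝[S] x) (𝓝 (∑' _ : α, (0 : V))) := by
    refine tendsto_tsum_of_dominated_convergence (hu.mul_left 2) (fun a => ?_) ?_
    · refine tendsto_zero_iff_norm_tendsto_zero.2 ?_
      simpa only [hg, norm_smul, norm_inv, norm_norm] using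
        hasFDerivWithinAt_iff_tendsto.1 (hf a x hx)
    · filter_upwards [self_mem_nhdsWithin] with y hy a
      have hle := norm_sub_sub_fderivWithin_apply_le hS (hf a) (hb a) hx hy
      have hua : 0 ≤ u a := (norm_nonneg _).trans (hb a x hx)
      rw [hg, norm_smul, norm_inv, norm_norm]
      exact inv_mul_le_of_le_mul₀ (norm_nonneg _) (by positivity) (hle.trans_eq (mul_comm _ _))
  rw [tsum_zero] at hgtends
  refine hasFDerivWithinAt_iff_tendsto.2 ((norm_zero (E := V) ▸ hgtends.norm).congr' ?_)
  filter_upwards [self_mem_nhdsWithin] with y hy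
  have happly : Summable fun a => f' a x (y - x) :=
    hf'x.mapL (ContinuousLinearMap.apply ℝ V (y - x))
  have hsum : ∑' a, (f a y - f a x - f' a x (y - x)) =
      (∑' a, f a y) - (∑' a, f a x) - (∑' a, f' a x) (y - x) := by
    rw [((hs y hy).sub (hs x hx)).tsum_sub happly, (hs y hy).tsum_sub (hs x hx)]
    exact congrArg _ ((ContinuousLinearMap.apply ℝ V (y - x)).map_tsum hf'x).symm
  rw [tsum_const_smul'' , hsum, norm_smul, norm_inv, norm_norm]

theorem hasDerivWithinAt_tsum_of_convex {I : Set ℝ} (hI : Convex ℝ I) {f f' : α → ℝ → V}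
    {u : α → ℝ} (hu : Summable u) (hf : ∀ a, ∀ t ∈ I, HasDerivWithinAt (f a) (f' a t) I t)
    (hb : ∀ a, ∀ t ∈ I, ‖f' a t‖ ≤ u a) (hs : ∀ t ∈ I, Summable fun a => f a t)
    {t : ℝ} (ht : t ∈ I) :
    HasDerivWithinAt (fun r => ∑' a, f a r) (∑' a, f' a t) I t := by
  have hb' (a : α) (r : ℝ) (hr : r ∈ I) :
      ‖ContinuousLinearMap.toSpanSingleton ℝ (f' a r)‖ ≤ u a := by
    simpa using hb a r hr
  have hsum : Summable fun a => ContinuousLinearMap.toSpanSingleton ℝ (f' a t) :=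
    .of_norm_bounded hu fun a => hb' a t ht
  have h := (hasFDerivWithinAt_tsum_of_convex hI hu (fun a r hr => (hf a r hr).hasFDerivWithinAt)
    hb' hs ht).hasDerivWithinAt
  have happly := (ContinuousLinearMap.apply ℝ V (1 : ℝ)).map_tsum hsum
  simp only [ContinuousLinearMap.apply_apply, ContinuousLinearMap.toSpanSingleton_apply,
    one_smul] at happly
  rwa [happly] at h

theorem hasDerivWithinAt_tsum_Ici {s t : ℝ} {f f' : α → ℝ → V}
    (hf : ∀ a, ∀ t ∈ Ici s, HasDerivWithinAt (f a) (f' a t) (Ici s) t)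
    (hs : ∀ t ∈ Ici s, Summable fun a => f a t)
    (hb : ∀ T, ∃ u : α → ℝ, Summable u ∧ ∀ t ∈ Icc s T, ∀ a, ‖f' a t‖ ≤ u a) (ht : t ∈ Ici s) :
    HasDerivWithinAt (fun t => ∑' a, f a t) (∑' a, f' a t) (Ici s) t := by
  obtain ⟨u, hu, hfu⟩ := hb (t + 1)
  exact (hasDerivWithinAt_tsum_of_convex (convex_Icc s (t + 1)) hu
    (fun a r hr => (hf a r hr.1).mono Icc_subset_Ici_self) (fun a r hr => hfu r hr a)
    (fun r hr => hs r hr.1) ⟨ht, (lt_add_one t).le⟩).mono_of_mem_nhdsWithin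
    (Icc_add_one_mem_nhdsWithin_Ici s t)

end Series

/-! ### Rapidly decaying families of coefficients -/

section Coefficients

variable {ι : Type*} [Fintype ι] {J : Set ℝ} {s t : ℝ} {n : ℕ} {a b : (ι → ℤ) → ℝ → ℂ}

theorem exists_summable_one_add_norm_pow_inv (ι : Type*) [Fintype ι] :
    ∃ p : ℕ, Summable fun k : ι → ℤ => ((1 + ‖k‖) ^ p)⁻¹ := by
  let L : Submodule ℤ (ι → ℝ) := Submodule.span ℤ (range (Pi.basisFun ℝ ι))
  have hmem (k : ι → ℤ) : (fun i => (k i : ℝ)) ∈ L := by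
    rw [Module.Basis.mem_span_iff_repr_mem]
    simp
  have hinj : Function.Injective fun k : ι → ℤ => (⟨fun i => (k i : ℝ), hmem k⟩ : L) :=
    fun k l h => funext fun i => Int.cast_injective (congrFun (congrArg Subtype.val h) i)
  have hnorm (k : ι → ℤ) : ‖(⟨fun i => (k i : ℝ), hmem k⟩ : L)‖ = ‖k‖ := by
    have hcoord (i : ι) : ‖(k i : ℝ)‖₊ = ‖k i‖₊ := by ext; simp [Int.norm_eq_abs]
    simp [Pi.norm_def, hcoord]
  refine ⟨Module.finrank ℤ L + 1, .of_norm_bounded_eventually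
    ((ZLattice.summable_norm_pow_inv L _ (Nat.lt_succ_self _)).comp_injective hinj) ?_⟩
  filter_upwards [(finite_singleton (0 : ι → ℤ)).compl_mem_cofinite] with k hk0
  have hk : 0 < ‖k‖ := norm_pos_iff.2 hk0
  rw [Function.comp_apply, hnorm, norm_inv, norm_pow, norm_of_nonneg (by positivity), inv_pow]
  gcongr
  linarith

/-- The family `(c_k(t))_k` decays faster than every power of `1 + ‖k‖`, uniformly in `t ∈ J`. -/
def RapidDecayOn (J : Set ℝ) (c : (ι → ℤ) → ℝ → ℂ) : Prop :=
  ∀ N : ℕ, ∃ C : ℝ, ∀ t ∈ J, ∀ k, (1 + ‖k‖) ^ N * ‖c k t‖ ≤ C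

/-- `‖m k‖` grows at most polynomially in `‖k‖`, as does the symbol of a differential operator. -/
def PolynomialGrowth (m : (ι → ℤ) → ℂ) : Prop :=
  ∃ A : ℝ, ∃ p : ℕ, 0 ≤ A ∧ ∀ k, ‖m k‖ ≤ A * (1 + ‖k‖) ^ p

namespace RapidDecayOn

theorem zero : RapidDecayOn J fun (_ : ι → ℤ) _ => 0 :=
  fun N => ⟨0, fun t _ k => by simp⟩

theorem add (ha : RapidDecayOn J a) (hb : RapidDecayOn J b) :
    RapidDecayOn J fun k t => a k t + b k t := fun N => by
  obtain ⟨A, hA⟩ := ha N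
  obtain ⟨B, hB⟩ := hb N
  refine ⟨A + B, fun t ht k => ?_⟩
  calc (1 + ‖k‖) ^ N * ‖a k t + b k t‖ ≤ (1 + ‖k‖) ^ N * (‖a k t‖ + ‖b k t‖) := by
        gcongr; exact norm_add_le _ _
    _ ≤ A + B := by rw [mul_add]; exact add_le_add (hA t ht k) (hB t ht k)

theorem multiplier {m : (ι → ℤ) → ℂ} (hm : PolynomialGrowth m) (ha : RapidDecayOn J a) :
    RapidDecayOn J fun k t => m k * a k t := fun N => by
  obtain ⟨A, p, hA, hmA⟩ := hm
  obtain ⟨B, hB⟩ := ha (N + p)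
  refine ⟨A * B, fun t ht k => ?_⟩
  calc (1 + ‖k‖) ^ N * ‖m k * a k t‖ ≤ (1 + ‖k‖) ^ N * (A * (1 + ‖k‖) ^ p * ‖a k t‖) := by
        rw [norm_mul]; gcongr; exact hmA k
    _ = A * ((1 + ‖k‖) ^ (N + p) * ‖a k t‖) := by ring
    _ ≤ A * B := by gcongr; exact hB t ht k

theorem exists_summable_bound (ha : RapidDecayOn J a) (N : ℕ) :
    ∃ u : (ι → ℤ) → ℝ, Summable u ∧ ∀ t ∈ J, ∀ k, (1 + ‖k‖) ^ N * ‖a k t‖ ≤ u k := by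
  obtain ⟨p, hp⟩ := exists_summable_one_add_norm_pow_inv ι
  obtain ⟨C, hC⟩ := ha (N + p)
  refine ⟨fun k => C * ((1 + ‖k‖) ^ p)⁻¹, hp.mul_left C, fun t ht k => ?_⟩
  rw [le_mul_inv_iff₀ (by positivity)]
  exact (le_of_eq (by rw [pow_add]; ring)).trans (hC t ht k)

end RapidDecayOn

theorem one_add_norm_le_mul {G : Type*} [SeminormedAddCommGroup G] (x y : G) :
    1 + ‖x‖ ≤ (1 + ‖x - y‖) * (1 + ‖y‖) := by
  have : ‖x‖ ≤ ‖x - y‖ + ‖y‖ := by simpa using norm_add_le (x - y) y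
  nlinarith [norm_nonneg (x - y), norm_nonneg y]

/-- The convolution `(a * b)_k(t) = ∑_j a_{k-j}(t) b_j(t)`: the coefficients of the product of two
functions with coefficients `a` and `b`. -/
noncomputable def latticeConvolution (a b : (ι → ℤ) → ℝ → ℂ) (k : ι → ℤ) (t : ℝ) : ℂ :=
  ∑' j, a (k - j) t * b j t

theorem RapidDecayOn.exists_summable_convolution_bound (ha : RapidDecayOn J a)
    (hb : RapidDecayOn J b) (N : ℕ) : ∃ u : (ι → ℤ) → ℝ, Summable u ∧
      ∀ t ∈ J, ∀ k j, (1 + ‖k‖) ^ N * ‖a (k - j) t * b j t‖ ≤ u j := by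
  obtain ⟨A, hA⟩ := ha N
  obtain ⟨u, hu, hub⟩ := hb.exists_summable_bound N
  refine ⟨fun j => A * u j, hu.mul_left A, fun t ht k j => ?_⟩
  calc (1 + ‖k‖) ^ N * ‖a (k - j) t * b j t‖
      ≤ ((1 + ‖k - j‖) * (1 + ‖j‖)) ^ N * (‖a (k - j) t‖ * ‖b j t‖) := by
        rw [norm_mul]; gcongr; exact one_add_norm_le_mul k j
    _ = ((1 + ‖k - j‖) ^ N * ‖a (k - j) t‖) * ((1 + ‖j‖) ^ N * ‖b j t‖) := by rw [mul_pow]; ring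
    _ ≤ A * u j := mul_le_mul (hA t ht _) (hub t ht j) (by positivity)
        (le_trans (by positivity) (hA t ht (k - j)))

theorem RapidDecayOn.summable_convolution (ha : RapidDecayOn J a) (hb : RapidDecayOn J b)
    (ht : t ∈ J) (k : ι → ℤ) : Summable fun j => a (k - j) t * b j t := by
  obtain ⟨u, hu, hub⟩ := ha.exists_summable_convolution_bound hb 0
  exact .of_norm_bounded hu fun j => by simpa using hub t ht k j

theorem RapidDecayOn.convolution (ha : RapidDecayOn J a) (hb : RapidDecayOn J b) :
    RapidDecayOn J (latticeConvolution a b) := fun N => by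
  obtain ⟨u, hu, hub⟩ := ha.exists_summable_convolution_bound hb N
  refine ⟨∑' j, u j, fun t ht k => ?_⟩
  have hs : Summable fun j => ‖a (k - j) t * b j t‖ := (ha.summable_convolution hb ht k).norm
  calc (1 + ‖k‖) ^ N * ‖latticeConvolution a b k t‖
      ≤ (1 + ‖k‖) ^ N * ∑' j, ‖a (k - j) t * b j t‖ := by
        gcongr; exact norm_tsum_le_tsum_norm hs
    _ = ∑' j, (1 + ‖k‖) ^ N * ‖a (k - j) t * b j t‖ := tsum_mul_left.symm
    _ ≤ ∑' j, u j := (hs.mul_left _).tsum_le_tsum (fun j => hub t ht k j) hu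

/-- A family of coefficients, continuous on `[s, ∞)`, with rapid decay locally uniformly in
time. -/
structure ContinuousDecay (s : ℝ) (c : (ι → ℤ) → ℝ → ℂ) : Prop where
  continuousOn : ∀ k, ContinuousOn (c k) (Ici s)
  rapidDecayOn : ∀ T, RapidDecayOn (Icc s T) c

/-- A family of coefficients that is `n` times continuously differentiable on `[s, ∞)`, all of
whose derivatives decay rapidly. The recursion on `n` suits equations that express the derivative
of a family through the family itself. -/
def SmoothDecay (s : ℝ) : ℕ → ((ι → ℤ) → ℝ → ℂ) → Prop
  | 0, c => ContinuousDecay s c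
  | n + 1, c => ContinuousDecay s c ∧
      ∃ c', (∀ k, ∀ t ∈ Ici s, HasDerivWithinAt (c k) (c' k t) (Ici s) t) ∧ SmoothDecay s n c'

namespace ContinuousDecay

theorem zero : ContinuousDecay s fun (_ : ι → ℤ) _ => 0 :=
  ⟨fun _ => continuousOn_const, fun _ => .zero⟩

theorem add (ha : ContinuousDecay s a) (hb : ContinuousDecay s b) :
    ContinuousDecay s fun k t => a k t + b k t :=
  ⟨fun k => (ha.continuousOn k).add (hb.continuousOn k),
    fun T => (ha.rapidDecayOn T).add (hb.rapidDecayOn T)⟩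

theorem multiplier {m : (ι → ℤ) → ℂ} (hm : PolynomialGrowth m) (ha : ContinuousDecay s a) :
    ContinuousDecay s fun k t => m k * a k t :=
  ⟨fun k => (ha.continuousOn k).const_mul (m k), fun T => (ha.rapidDecayOn T).multiplier hm⟩

theorem exists_summable_convolution_bound (ha : ContinuousDecay s a) (hb : ContinuousDecay s b)
    (k : ι → ℤ) (T : ℝ) :
    ∃ u : (ι → ℤ) → ℝ, Summable u ∧ ∀ t ∈ Icc s T, ∀ j, ‖a (k - j) t * b j t‖ ≤ u j := by
  obtain ⟨u, hu, hub⟩ :=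
    (ha.rapidDecayOn T).exists_summable_convolution_bound (hb.rapidDecayOn T) 0
  exact ⟨u, hu, fun t ht j => by simpa using hub t ht k j⟩

theorem summable_convolution (ha : ContinuousDecay s a) (hb : ContinuousDecay s b)
    (ht : t ∈ Ici s) (k : ι → ℤ) : Summable fun j => a (k - j) t * b j t :=
  (ha.rapidDecayOn t).summable_convolution (hb.rapidDecayOn t) ⟨ht, le_rfl⟩ k

theorem convolution (ha : ContinuousDecay s a) (hb : ContinuousDecay s b) :
    ContinuousDecay s (latticeConvolution a b) :=
  ⟨fun k => continuousOn_tsum_Ici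
      (fun j => (ha.continuousOn (k - j)).mul (hb.continuousOn j))
      (ha.exists_summable_convolution_bound hb k),
    fun T => (ha.rapidDecayOn T).convolution (hb.rapidDecayOn T)⟩

theorem hasDerivWithinAt_convolution {a' b' : (ι → ℤ) → ℝ → ℂ} (ha : ContinuousDecay s a)
    (hb : ContinuousDecay s b) (ha' : ContinuousDecay s a') (hb' : ContinuousDecay s b')
    (hda : ∀ k, ∀ t ∈ Ici s, HasDerivWithinAt (a k) (a' k t) (Ici s) t)
    (hdb : ∀ k, ∀ t ∈ Ici s, HasDerivWithinAt (b k) (b' k t) (Ici s) t) (k : ι → ℤ)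
    (ht : t ∈ Ici s) :
    HasDerivWithinAt (latticeConvolution a b k)
      (latticeConvolution a' b k t + latticeConvolution a b' k t) (Ici s) t := by
  simp only [latticeConvolution]
  rw [← (ha'.summable_convolution hb ht k).tsum_add (ha.summable_convolution hb' ht k)]
  refine hasDerivWithinAt_tsum_Ici (fun j t ht => (hda (k - j) t ht).mul (hdb j t ht))
    (fun t ht => ha.summable_convolution hb ht k) (fun T => ?_) ht
  obtain ⟨u, hu, hub⟩ := ha'.exists_summable_convolution_bound hb k T
  obtain ⟨v, hv, hvb⟩ := ha.exists_summable_convolution_bound hb' k T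
  exact ⟨fun j => u j + v j, hu.add hv,
    fun t ht j => norm_add_le_of_le (hub t ht j) (hvb t ht j)⟩

end ContinuousDecay

namespace SmoothDecay

theorem continuousDecay (h : SmoothDecay s n a) : ContinuousDecay s a := by
  cases n with
  | zero => exact h
  | succ n => exact h.1

theorem of_succ (h : SmoothDecay s (n + 1) a) : SmoothDecay s n a := by
  induction n generalizing a with
  | zero => exact h.1
  | succ n ih =>
    obtain ⟨ha, a', hda, ha'⟩ := h
    exact ⟨ha, a', hda, ih ha'⟩

theorem zero : SmoothDecay s n fun (_ : ι → ℤ) _ => 0 := by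
  induction n with
  | zero => exact ContinuousDecay.zero
  | succ n ih => exact ⟨.zero, _, fun _ _ _ => hasDerivWithinAt_const _ _ _, ih⟩

theorem add (ha : SmoothDecay s n a) (hb : SmoothDecay s n b) :
    SmoothDecay s n fun k t => a k t + b k t := by
  induction n generalizing a b with
  | zero => exact ContinuousDecay.add ha hb
  | succ n ih =>
    obtain ⟨ha, a', hda, ha'⟩ := ha
    obtain ⟨hb, b', hdb, hb'⟩ := hb
    exact ⟨ha.add hb, _, fun k t ht => (hda k t ht).add (hdb k t ht), ih ha' hb'⟩

theorem multiplier {m : (ι → ℤ) → ℂ} (hm : PolynomialGrowth m) (ha : SmoothDecay s n a) :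
    SmoothDecay s n fun k t => m k * a k t := by
  induction n generalizing a with
  | zero => exact ContinuousDecay.multiplier hm ha
  | succ n ih =>
    obtain ⟨ha, a', hda, ha'⟩ := ha
    exact ⟨ha.multiplier hm, _, fun k t ht => (hda k t ht).const_mul (m k), ih ha'⟩

theorem sum {κ : Type*} (F : Finset κ) {c : κ → (ι → ℤ) → ℝ → ℂ}
    (h : ∀ i ∈ F, SmoothDecay s n (c i)) : SmoothDecay s n fun k t => ∑ i ∈ F, c i k t := by
  classical
  induction F using Finset.induction_on with
  | empty => simpa using zero
  | insert i F hi ih =>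
    simp only [Finset.sum_insert hi]
    exact (h i (Finset.mem_insert_self i F)).add
      (ih fun j hj => h j (Finset.mem_insert_of_mem hj))

theorem convolution (ha : SmoothDecay s n a) (hb : SmoothDecay s n b) :
    SmoothDecay s n (latticeConvolution a b) := by
  induction n generalizing a b with
  | zero => exact ContinuousDecay.convolution ha hb
  | succ n ih =>
    have ha₀ := ha.of_succ
    have hb₀ := hb.of_succ
    obtain ⟨ha, a', hda, ha'⟩ := ha
    obtain ⟨hb, b', hdb, hb'⟩ := hb
    exact ⟨ha.convolution hb, _, fun k t ht => ha.hasDerivWithinAt_convolution hb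
      ha'.continuousDecay hb'.continuousDecay hda hdb k ht, (ih ha' hb₀).add (ih ha₀ hb')⟩

end SmoothDecay

end Coefficients

/-! ### Fourier series on slabs `[s, ∞) × ℝ^ι` -/

section Characters

variable {ι : Type*}

/-- The symbol `2πi k_i` of the partial derivative `∂_i`. -/
noncomputable def derivSymbol (i : ι) (k : ι → ℤ) : ℂ := 2 * π * Complex.I * k i

theorem derivSymbol_neg (i : ι) (k : ι → ℤ) : derivSymbol i (-k) = -derivSymbol i k := by
  simp [derivSymbol]

theorem norm_derivSymbol (i : ι) (k : ι → ℤ) : ‖derivSymbol i k‖ = 2 * π * ‖k i‖ := by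
  simp [derivSymbol, abs_of_pos pi_pos, Int.norm_eq_abs]

variable [Fintype ι]

/-- The character `e_k(x) = exp(2πi k·x)` of the torus, as a function on `ℝ^ι`. -/
noncomputable def character (k : ι → ℤ) (x : ι → ℝ) : ℂ :=
  UnitAddTorus.mFourier k fun i => (x i : UnitAddCircle)

theorem character_eq_exp (k : ι → ℤ) (x : ι → ℝ) :
    character k x = Complex.exp (∑ i, derivSymbol i k * x i) := by
  rw [Complex.exp_sum]
  refine Finset.prod_congr rfl fun i _ => ?_
  rw [fourier_coe_apply, derivSymbol, Complex.ofReal_one, div_one]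

theorem norm_character (k : ι → ℤ) (x : ι → ℝ) : ‖character k x‖ = 1 := by
  simp only [character, UnitAddTorus.mFourier, ContinuousMap.coe_mk, norm_prod, fourier_apply,
    Circle.norm_coe, Finset.prod_const_one]

theorem norm_mul_character (z : ℂ) (k : ι → ℤ) (x : ι → ℝ) : ‖z * character k x‖ = ‖z‖ := by
  rw [norm_mul, norm_character, mul_one]

theorem character_add (k l : ι → ℤ) (x : ι → ℝ) :
    character (k + l) x = character k x * character l x :=
  UnitAddTorus.mFourier_add

theorem latticePeriodic_character (k : ι → ℤ) : LatticePeriodic (character k) := fun x l => by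
  have hcoe (i : ι) : ((x i + l i : ℝ) : UnitAddCircle) = x i := by
    rw [AddCircle.coe_add, add_eq_left, AddCircle.coe_eq_zero_iff]
    exact ⟨l i, by simp⟩
  simp only [character, Pi.add_apply, hcoe]

theorem contDiff_character {n : WithTop ℕ∞} (k : ι → ℤ) : ContDiff ℝ n (character k) := by
  simp only [funext (character_eq_exp k)]
  exact (ContDiff.sum fun i _ => contDiff_const.mul
    (Complex.ofRealCLM.contDiff.comp (contDiff_apply ℝ ℝ i))).cexp

theorem hasFDerivAt_character (k : ι → ℤ) (x : ι → ℝ) :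
    HasFDerivAt (character k) (∑ i, (ContinuousLinearMap.proj (R := ℝ) (φ := fun _ : ι => ℝ)
      i).smulRight (derivSymbol i k * character k x)) x := by
  simp only [funext (character_eq_exp k)]
  refine (HasFDerivAt.fun_sum fun i _ => (Complex.ofRealCLM.hasFDerivAt.comp x
    (hasFDerivAt_apply i x)).const_mul (derivSymbol i k)).cexp.congr_fderiv ?_
  ext v
  simp only [smul_apply, sum_apply, Finset.smul_sum,
    ContinuousLinearMap.smulRight_apply]
  refine Finset.sum_congr rfl fun i _ => ?_
  simp
  ring

theorem fderiv_character_single [DecidableEq ι] (k : ι → ℤ) (x : ι → ℝ) (i : ι) :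
    fderiv ℝ (character k) x (Pi.single i 1) = derivSymbol i k * character k x := by
  simp [(hasFDerivAt_character k x).fderiv, Pi.single_apply]

theorem norm_derivSymbol_le (i : ι) (k : ι → ℤ) : ‖derivSymbol i k‖ ≤ 2 * π * (1 + ‖k‖) := by
  rw [norm_derivSymbol]
  gcongr
  linarith [norm_le_pi_norm k i]

theorem polynomialGrowth_derivSymbol (i : ι) : PolynomialGrowth (derivSymbol i) :=
  ⟨2 * π, 1, by positivity, fun k => by simpa using norm_derivSymbol_le i k⟩

theorem norm_le_sum_norm_derivSymbol (k : ι → ℤ) : ‖k‖ ≤ ∑ i, ‖derivSymbol i k‖ := by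
  refine (pi_norm_le_iff_of_nonneg (Finset.sum_nonneg fun i _ => norm_nonneg _)).2 fun i => ?_
  calc ‖k i‖ ≤ 2 * π * ‖k i‖ := le_mul_of_one_le_left (norm_nonneg _) (by linarith [pi_gt_three])
    _ = ‖derivSymbol i k‖ := (norm_derivSymbol i k).symm
    _ ≤ ∑ i, ‖derivSymbol i k‖ :=
        Finset.single_le_sum (f := fun i => ‖derivSymbol i k‖) (fun i _ => norm_nonneg _)
          (Finset.mem_univ i)

end Characters

section Synthesis

variable {ι : Type*} [Fintype ι] {s t : ℝ} {a b c c' : (ι → ℤ) → ℝ → ℂ}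

/-- The function `∑_k c_k(t) e_k(x)` with Fourier coefficients `c`. -/
noncomputable def synthesis (c : (ι → ℤ) → ℝ → ℂ) (t : ℝ) (x : ι → ℝ) : ℂ :=
  ∑' k, c k t * character k x

/-- The differential `(τ, v) ↦ τ z + ∑ i, v_i w_i` with time component `z` and space components
`w`, as a bounded function of `(z, w)`. -/
noncomputable def slabDifferential (ι : Type*) [Fintype ι] :
    ℂ × (ι → ℂ) →L[ℝ] ℝ × (ι → ℝ) →L[ℝ] ℂ :=
  (ContinuousLinearMap.smulRightL ℝ _ ℂ (.fst ℝ ℝ (ι → ℝ))).comp (.fst ℝ ℂ (ι → ℂ)) +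
    ∑ i, (ContinuousLinearMap.smulRightL ℝ _ ℂ ((ContinuousLinearMap.proj i).comp
      (.snd ℝ ℝ (ι → ℝ)))).comp ((ContinuousLinearMap.proj i).comp (.snd ℝ ℂ (ι → ℂ)))

theorem slabDifferential_apply (w : ℂ × (ι → ℂ)) (q : ℝ × (ι → ℝ)) :
    slabDifferential ι w q = q.1 • w.1 + ∑ i, q.2 i • w.2 i := by
  simp [slabDifferential]

theorem hasFDerivWithinAt_mul_character {I : Set ℝ} {f : ℝ → ℂ} {f' : ℂ}
    (hf : HasDerivWithinAt f f' I t) (k : ι → ℤ) (x : ι → ℝ) :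
    HasFDerivWithinAt (fun p : ℝ × (ι → ℝ) => f p.1 * character k p.2)
      (slabDifferential ι (f' * character k x, fun i => derivSymbol i k * f t * character k x))
      (I ×ˢ univ) (t, x) := by
  have hchar := ((hasFDerivAt_character k x).comp (t, x)
    (hasFDerivAt_snd (𝕜 := ℝ) (p := (t, x)))).hasFDerivWithinAt (s := I ×ˢ univ)
  refine ((hf.hasFDerivWithinAt.comp (t, x) hasFDerivWithinAt_fst fun q hq => hq.1).mul
    hchar).congr_fderiv (ContinuousLinearMap.ext fun q => ?_)
  simp only [slabDifferential_apply, Function.comp_apply, add_apply,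
    smul_apply, ContinuousLinearMap.comp_apply, sum_apply,
    ContinuousLinearMap.smulRight_apply, Finset.smul_sum]
  rw [add_comm]
  refine congrArg₂ _ ?_ (Finset.sum_congr rfl fun i _ => ?_)
  · simp
    ring
  · simp
    ring

theorem norm_slabDifferential_mul_character_le (z w : ℂ) (k : ι → ℤ) (x : ι → ℝ) :
    ‖slabDifferential ι (z * character k x, fun i => derivSymbol i k * w * character k x)‖ ≤
      ‖slabDifferential ι‖ * (‖z‖ + 2 * π * ((1 + ‖k‖) * ‖w‖)) := by
  refine ContinuousLinearMap.le_opNorm_of_le _ (norm_prod_le_iff.2 ⟨?_, ?_⟩)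
  · rw [norm_mul_character]
    exact le_add_of_nonneg_right (by positivity)
  · refine ((pi_norm_le_iff_of_nonneg (by positivity)).2 fun i => ?_).trans
      (le_add_of_nonneg_left (norm_nonneg z))
    rw [norm_mul_character, norm_mul, ← mul_assoc]
    gcongr
    exact norm_derivSymbol_le i k

theorem Icc_add_one_prod_univ_mem_nhdsWithin {X : Type*} [TopologicalSpace X] (s t : ℝ) (x : X) :
    Icc s (t + 1) ×ˢ univ ∈ 𝓝[Ici s ×ˢ univ] (t, x) := by
  rw [nhdsWithin_prod_eq]
  exact prod_mem_prod (Icc_add_one_mem_nhdsWithin_Ici s t) (by simp)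

theorem latticePeriodic_synthesis (c : (ι → ℤ) → ℝ → ℂ) (t : ℝ) :
    LatticePeriodic (synthesis c t) :=
  fun x l => tsum_congr fun k => congrArg _ (latticePeriodic_character k x l)

namespace ContinuousDecay

theorem summable_norm (hc : ContinuousDecay s c) (ht : t ∈ Ici s) : Summable fun k => ‖c k t‖ := by
  obtain ⟨u, hu, hcu⟩ := (hc.rapidDecayOn t).exists_summable_bound 0
  exact .of_nonneg_of_le (fun k => norm_nonneg _)
    (fun k => by simpa using hcu t ⟨ht, le_rfl⟩ k) hu

theorem summable_mul_character (hc : ContinuousDecay s c) (ht : t ∈ Ici s) (x : ι → ℝ) :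
    Summable fun k => c k t * character k x :=
  .of_norm_bounded (hc.summable_norm ht) fun k => (norm_mul_character _ k x).le

theorem continuousOn_synthesis (hc : ContinuousDecay s c) :
    ContinuousOn (fun p : ℝ × (ι → ℝ) => synthesis c p.1 p.2) (Ici s ×ˢ univ) := by
  rintro ⟨t, x⟩ ⟨ht, -⟩
  obtain ⟨u, hu, hcu⟩ := (hc.rapidDecayOn (t + 1)).exists_summable_bound 0
  refine ContinuousWithinAt.mono_of_mem_nhdsWithin (continuousOn_tsum
    (s := Icc s (t + 1) ×ˢ univ) (fun k => ?_) hu (fun k q hq => ?_) (t, x)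
    ⟨⟨ht, (lt_add_one t).le⟩, mem_univ x⟩) (Icc_add_one_prod_univ_mem_nhdsWithin s t x)
  · exact ((hc.continuousOn k).comp continuousOn_fst fun q hq => hq.1.1).mul
      ((contDiff_character (n := 0) k).continuous.comp continuous_snd).continuousOn
  · simpa only [norm_mul_character, pow_zero, one_mul] using hcu q.1 hq.1 k

theorem hasFDerivWithinAt_synthesis (hc : ContinuousDecay s c) (hc' : ContinuousDecay s c')
    (hd : ∀ k, ∀ t ∈ Ici s, HasDerivWithinAt (c k) (c' k t) (Ici s) t) (ht : t ∈ Ici s)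
    (x : ι → ℝ) :
    HasFDerivWithinAt (fun p : ℝ × (ι → ℝ) => synthesis c p.1 p.2)
      (slabDifferential ι
        (synthesis c' t x, fun i => synthesis (fun k t => derivSymbol i k * c k t) t x))
      (Ici s ×ˢ univ) (t, x) := by
  obtain ⟨u, hu, hcu⟩ := (hc.rapidDecayOn (t + 1)).exists_summable_bound 1
  obtain ⟨u', hu', hcu'⟩ := (hc'.rapidDecayOn (t + 1)).exists_summable_bound 0
  have hbound (k : ι → ℤ) (q : ℝ × (ι → ℝ)) (hq : q ∈ Icc s (t + 1) ×ˢ univ) :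
      ‖slabDifferential ι (c' k q.1 * character k q.2,
        fun i => derivSymbol i k * c k q.1 * character k q.2)‖ ≤
        ‖slabDifferential ι‖ * (u' k + 2 * π * u k) := by
    refine (norm_slabDifferential_mul_character_le _ _ k q.2).trans ?_
    gcongr
    · simpa using hcu' q.1 hq.1 k
    · simpa using hcu q.1 hq.1 k
  have hsum := (slabDifferential ι).hasSum ((hc'.summable_mul_character ht x).hasSum.prodMk
    (Pi.hasSum.2 fun i => ((hc.multiplier (polynomialGrowth_derivSymbol i)).summable_mul_character
      ht x).hasSum))
  have h := hasFDerivWithinAt_tsum_of_convex ((convex_Icc s (t + 1)).prod convex_univ)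
    ((hu'.add (hu.mul_left (2 * π))).mul_left ‖slabDifferential ι‖)
    (fun k q hq => hasFDerivWithinAt_mul_character
      ((hd k q.1 hq.1.1).mono Icc_subset_Ici_self) k q.2) hbound
    (fun q hq => hc.summable_mul_character hq.1.1 q.2)
    (show (t, x) ∈ Icc s (t + 1) ×ˢ univ from ⟨⟨ht, (lt_add_one t).le⟩, mem_univ x⟩)
  exact (h.congr_fderiv hsum.tsum_eq).mono_of_mem_nhdsWithin
    (Icc_add_one_prod_univ_mem_nhdsWithin s t x)

theorem hasDerivWithinAt_synthesis (hc : ContinuousDecay s c) (hc' : ContinuousDecay s c')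
    (hd : ∀ k, ∀ t ∈ Ici s, HasDerivWithinAt (c k) (c' k t) (Ici s) t) (ht : t ∈ Ici s)
    (x : ι → ℝ) : HasDerivWithinAt (fun r => synthesis c r x) (synthesis c' t x) (Ici s) t := by
  have h := (hc.hasFDerivWithinAt_synthesis hc' hd ht x).comp_hasDerivWithinAt t
    (l := fun p : ℝ × (ι → ℝ) => synthesis c p.1 p.2) (f := fun r => (r, x))
    ((hasDerivWithinAt_id t (Ici s)).prodMk (hasDerivWithinAt_const t _ x))
    fun r hr => ⟨hr, mem_univ x⟩
  simpa [slabDifferential_apply, Function.comp_def] using h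

theorem hasFDerivAt_synthesis (hc : ContinuousDecay s c) (ht : t ∈ Ici s) (x : ι → ℝ) :
    HasFDerivAt (synthesis c t)
      ((slabDifferential ι (0, fun i => synthesis (fun k t => derivSymbol i k * c k t) t x)).comp
        (.inr ℝ ℝ (ι → ℝ))) x := by
  have hfrozen : ContinuousDecay t fun k _ => c k t :=
    ⟨fun k => continuousOn_const, fun T N => by
      obtain ⟨C, hC⟩ := hc.rapidDecayOn t N
      exact ⟨C, fun r _ k => hC t ⟨ht, le_rfl⟩ k⟩⟩
  have h := ((hfrozen.hasFDerivWithinAt_synthesis .zero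
    (fun k r _ => hasDerivWithinAt_const _ _ _) self_mem_Ici x).comp x
    (hasFDerivAt_prodMk_right t x).hasFDerivWithinAt (s := univ)
    fun y _ => ⟨self_mem_Ici, mem_univ y⟩).hasFDerivAt univ_mem
  have hzero : synthesis (fun (_ : ι → ℤ) _ => 0) t x = 0 := by simp [synthesis]
  rwa [hzero] at h

theorem fderiv_synthesis_single [DecidableEq ι] (hc : ContinuousDecay s c) (ht : t ∈ Ici s)
    (x : ι → ℝ) (i : ι) :
    fderiv ℝ (synthesis c t) x (Pi.single i 1) =
      synthesis (fun k t => derivSymbol i k * c k t) t x := by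
  simp [(hc.hasFDerivAt_synthesis ht x).fderiv, slabDifferential_apply, Pi.single_apply]

theorem synthesis_convolution (ha : ContinuousDecay s a) (hb : ContinuousDecay s b)
    (ht : t ∈ Ici s) (x : ι → ℝ) :
    synthesis (latticeConvolution a b) t x = synthesis a t x * synthesis b t x := by
  let e : (ι → ℤ) × (ι → ℤ) ≃ (ι → ℤ) × (ι → ℤ) :=
    ⟨fun p => (p.1 - p.2, p.2), fun p => (p.1 + p.2, p.2), fun p => by simp, fun p => by simp⟩
  have hprod := e.summable_iff.2 (summable_mul_of_summable_norm
    (ha.summable_mul_character ht x).norm (hb.summable_mul_character ht x).norm)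
  simp only [Function.comp_def] at hprod
  rw [synthesis, synthesis, synthesis, tsum_mul_tsum_of_summable_norm
    (ha.summable_mul_character ht x).norm (hb.summable_mul_character ht x).norm, ← e.tsum_eq,
    hprod.tsum_prod]
  refine tsum_congr fun k => ?_
  rw [latticeConvolution, ← tsum_mul_right]
  refine tsum_congr fun j => ?_
  have hk : character k x = character (k - j) x * character j x := by
    rw [← character_add, sub_add_cancel]
  simp only [e, Equiv.coe_fn_mk]
  rw [hk]
  ring

end ContinuousDecay

theorem SmoothDecay.contDiffOn_synthesis {n : ℕ} (hc : SmoothDecay s n c) :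
    ContDiffOnSlab n (Ici s) (synthesis c) := by
  induction n generalizing c with
  | zero => exact contDiffOn_zero.2 (ContinuousDecay.continuousOn_synthesis hc)
  | succ n ih =>
    have hspace (i : ι) := ih (hc.of_succ.multiplier (polynomialGrowth_derivSymbol i))
    obtain ⟨hc, c', hd, hc'⟩ := hc
    rw [ContDiffOnSlab, Nat.cast_add, Nat.cast_one,
      contDiffOn_succ_iff_hasFDerivWithinAt_of_uniqueDiffOn
      ((uniqueDiffOn_Ici s).prod uniqueDiffOn_univ)]
    exact ⟨by simp, _, (slabDifferential ι).contDiff.comp_contDiffOn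
      (ContDiffOn.prodMk (ih hc') (contDiffOn_pi.2 hspace)),
      fun p hp => hc.hasFDerivWithinAt_synthesis hc'.continuousDecay hd hp.1 p.2⟩

end Synthesis

section Analysis

variable {ι : Type*} [Fintype ι] {s t : ℝ} {f : ℝ → (ι → ℝ) → ℂ}

/-- Functions that are smooth on `[s, ∞) × ℝ^ι` and periodic in space. -/
structure SmoothPeriodic (s : ℝ) (f : ℝ → (ι → ℝ) → ℂ) : Prop where
  contDiffOnSlab : ContDiffOnSlab ∞ (Ici s) f
  latticePeriodic : ∀ t ∈ Ici s, LatticePeriodic (f t)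

/-- The `k`-th Fourier coefficient of `f(t, ·)` over the unit cell. -/
noncomputable def cellFourierCoeff (f : ℝ → (ι → ℝ) → ℂ) (k : ι → ℤ) (t : ℝ) : ℂ :=
  ∫ x in Icc 0 1, f t x * character (-k) x

namespace SmoothPeriodic

theorem fderiv_apply (hf : SmoothPeriodic s f) (v : ι → ℝ) :
    SmoothPeriodic s fun t x => fderiv ℝ (f t) x v :=
  ⟨hf.contDiffOnSlab.fderiv_apply (uniqueDiffOn_Ici s) v,
    fun t ht => (hf.latticePeriodic t ht).fderiv_apply v⟩

theorem derivWithin_time (hf : SmoothPeriodic s f) :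
    SmoothPeriodic s fun t x => derivWithin (fun r => f r x) (Ici s) t :=
  ⟨hf.contDiffOnSlab.derivWithin_time (uniqueDiffOn_Ici s), fun t ht x k =>
    derivWithin_congr (fun r hr => hf.latticePeriodic r hr x k) (hf.latticePeriodic t ht x k)⟩

theorem cellFourierCoeff_fderiv_single [DecidableEq ι] (hf : SmoothPeriodic s f) (i : ι)
    (k : ι → ℤ) (ht : t ∈ Ici s) :
    cellFourierCoeff (fun t x => fderiv ℝ (f t) x (Pi.single i 1)) k t =
      derivSymbol i k * cellFourierCoeff f k t := by
  have hft : ContDiff ℝ 1 (f t) := (hf.contDiffOnSlab.contDiff_slice ht).of_le (by simp)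
  have hchar : ContDiff ℝ 1 (character (-k)) := contDiff_character (-k)
  have hleibniz (x : ι → ℝ) : fderiv ℝ (fun y => f t y * character (-k) y) x (Pi.single i 1) =
      fderiv ℝ (f t) x (Pi.single i 1) * character (-k) x -
        derivSymbol i k * (f t x * character (-k) x) := by
    rw [fderiv_fun_mul (hft.differentiable one_ne_zero x) (hchar.differentiable one_ne_zero x)]
    simp only [add_apply, smul_apply, fderiv_character_single, derivSymbol_neg, smul_eq_mul]
    ring
  have hzero := ((hf.latticePeriodic t ht).map₂ (latticePeriodic_character (-k))
    (· * ·)).integral_Icc_fderiv_apply (hft.mul hchar) (Pi.single i 1)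
  have hint₁ : IntegrableOn (fun x => fderiv ℝ (f t) x (Pi.single i 1) * character (-k) x)
      (Icc 0 1) := Continuous.integrableOn_Icc
    (((hft.continuous_fderiv one_ne_zero).clm_apply continuous_const).mul hchar.continuous)
  have hint₂ : IntegrableOn (fun x => derivSymbol i k * (f t x * character (-k) x)) (Icc 0 1) :=
    (hft.continuous.mul hchar.continuous).const_mul _ |>.integrableOn_Icc
  simp only [hleibniz] at hzero
  rwa [integral_sub hint₁ hint₂, integral_const_mul, sub_eq_zero] at hzero

theorem hasDerivWithinAt_cellFourierCoeff (hf : SmoothPeriodic s f) (k : ι → ℤ) (ht : t ∈ Ici s) :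
    HasDerivWithinAt (cellFourierCoeff f k)
      (cellFourierCoeff (fun t x => derivWithin (fun r => f r x) (Ici s) t) k t) (Ici s) t := by
  have hF : ContDiffOnSlab 1 (Ici s) fun t x => f t x * character (-k) x :=
    (hf.contDiffOnSlab.of_le (by simp)).mul
      ((contDiff_character (-k)).comp contDiff_snd).contDiffOn
  have h := hF.hasDerivWithinAt_setIntegral (μ := volume) (convex_Ici s) isClosed_Ici
    (uniqueDiffOn_Ici s) (isCompact_Icc (a := 0) (b := 1)) ht
  have hderiv (x : ι → ℝ) : derivWithin (fun r => f r x * character (-k) x) (Ici s) t =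
      derivWithin (fun r => f r x) (Ici s) t * character (-k) x :=
    derivWithin_mul_const (hf.contDiffOnSlab.differentiableWithinAt_time (by simp) ht x) _
  simp only [hderiv] at h
  exact h

theorem exists_norm_cellFourierCoeff_le (hf : SmoothPeriodic s f) (T : ℝ) :
    ∃ C : ℝ, ∀ t ∈ Icc s T, ∀ k, ‖cellFourierCoeff f k t‖ ≤ C := by
  have hcompact : IsCompact (Icc s T ×ˢ Icc (0 : ι → ℝ) 1) := isCompact_Icc.prod isCompact_Icc
  obtain ⟨C, hC⟩ := hcompact.exists_bound_of_continuousOn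
    (hf.contDiffOnSlab.continuousOn.mono (prod_mono Icc_subset_Ici_self (subset_univ _)))
  refine ⟨C * volume.real (Icc (0 : ι → ℝ) 1), fun t ht k =>
    norm_setIntegral_le_of_norm_le_const isCompact_Icc.measure_lt_top fun x hx => ?_⟩
  rw [norm_mul_character]
  exact hC (t, x) ⟨ht, hx⟩

theorem rapidDecayOn_cellFourierCoeff (hf : SmoothPeriodic s f) (T : ℝ) :
    RapidDecayOn (Icc s T) (cellFourierCoeff f) := fun N => by
  classical
  induction N generalizing f with
  | zero => simpa using hf.exists_norm_cellFourierCoeff_le T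
  | succ N ih =>
    obtain ⟨C, hC⟩ := ih hf
    choose B hB using fun i => ih (hf.fderiv_apply (Pi.single i 1))
    refine ⟨C + ∑ i, B i, fun t ht k => ?_⟩
    calc (1 + ‖k‖) ^ (N + 1) * ‖cellFourierCoeff f k t‖
        = (1 + ‖k‖) ^ N * ‖cellFourierCoeff f k t‖ +
            ‖k‖ * ((1 + ‖k‖) ^ N * ‖cellFourierCoeff f k t‖) := by ring
      _ ≤ (1 + ‖k‖) ^ N * ‖cellFourierCoeff f k t‖ +
            (∑ i, ‖derivSymbol i k‖) * ((1 + ‖k‖) ^ N * ‖cellFourierCoeff f k t‖) := by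
          gcongr
          exact norm_le_sum_norm_derivSymbol k
      _ = (1 + ‖k‖) ^ N * ‖cellFourierCoeff f k t‖ + ∑ i, (1 + ‖k‖) ^ N *
            ‖cellFourierCoeff (fun t x => fderiv ℝ (f t) x (Pi.single i 1)) k t‖ := by
          simp only [hf.cellFourierCoeff_fderiv_single _ k ht.1, norm_mul, Finset.sum_mul,
            mul_left_comm]
      _ ≤ C + ∑ i, B i := add_le_add (hC t ht k) (Finset.sum_le_sum fun i _ => hB i t ht k)

theorem smoothDecay_cellFourierCoeff (hf : SmoothPeriodic s f) (n : ℕ) :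
    SmoothDecay s n (cellFourierCoeff f) := by
  have hcd {f : ℝ → (ι → ℝ) → ℂ} (hf : SmoothPeriodic s f) :
      ContinuousDecay s (cellFourierCoeff f) :=
    ⟨fun k t ht => (hf.hasDerivWithinAt_cellFourierCoeff k ht).continuousWithinAt,
      hf.rapidDecayOn_cellFourierCoeff⟩
  induction n generalizing f with
  | zero => exact hcd hf
  | succ n ih =>
    exact ⟨hcd hf, _, fun k t ht => hf.hasDerivWithinAt_cellFourierCoeff k ht,
      ih hf.derivWithin_time⟩

theorem synthesis_cellFourierCoeff (hf : SmoothPeriodic s f) (ht : t ∈ Ici s) (x : ι → ℝ) :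
    synthesis (cellFourierCoeff f) t x = f t x := by
  obtain ⟨g, hg⟩ := (hf.latticePeriodic t ht).exists_torus_lift
  have hquot : IsOpenQuotientMap (Pi.map fun (_ : ι) (y : ℝ) => (y : UnitAddCircle)) :=
    .piMap fun _ => QuotientAddGroup.isOpenQuotientMap_mk
  have hgc : Continuous g := by
    rw [hquot.isQuotientMap.continuous_iff]
    exact (hf.contDiffOnSlab.contDiff_slice ht).continuous.congr fun y => (hg y).symm
  have hcoeff : UnitAddTorus.mFourierCoeff g = fun k => cellFourierCoeff f k t := funext fun k => by
    rw [UnitAddTorus.mFourierCoeff_eq_integral g k 0,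
      setIntegral_congr_set (setOf_forall_mem_Ioc_ae_eq_Icc 0), zero_add]
    simp only [hg, smul_eq_mul, cellFourierCoeff, character, mul_comm]
  have hsum : Summable (UnitAddTorus.mFourierCoeff g) := by
    rw [hcoeff]
    exact (hf.smoothDecay_cellFourierCoeff 0).continuousDecay.summable_norm ht |>.of_norm
  have h := (UnitAddTorus.hasSum_mFourier_series_apply_of_summable (f := ⟨g, hgc⟩) hsum
    fun i => (x i : UnitAddCircle)).tsum_eq
  simp only [ContinuousMap.coe_mk, hg, hcoeff, smul_eq_mul] at h
  exact h

end SmoothPeriodic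

end Analysis

/-! ### Infinite systems of damped equations -/

section Damped

variable {F : Type*} [NormedAddCommGroup F] {s t : ℝ} {α : Type*} {ρ : α → ℝ → ℝ}
  {G : ℝ → (α → F) → α → F}

/-- The system `b_k' = G_k(t, b) - ρ_k b_k`, `k ∈ α`, has continuous coefficients on `[s, ∞)` and
its coupling `G` is bounded, in the supremum norm over `k`, by half of the damping `ρ`. -/
structure IsDampedSystem (s : ℝ) (ρ : α → ℝ → ℝ) (G : ℝ → (α → F) → α → F) : Prop where
  rate_pos : ∀ k, ∀ t ∈ Ici s, 0 < ρ k t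
  continuousOn_rate : ∀ k, ContinuousOn (ρ k) (Ici s)
  map_zero : ∀ t ∈ Ici s, ∀ k, G t 0 k = 0
  norm_sub_le : ∀ t ∈ Ici s, ∀ (x y : α → F) (B M : ℝ), (∀ k, ‖x k‖ ≤ B) → (∀ k, ‖y k‖ ≤ B) →
    (∀ k, ‖x k - y k‖ ≤ M) → ∀ k, ‖G t x k - G t y k‖ ≤ M / 2 * ρ k t
  continuousOn_coupling : ∀ (b : α → ℝ → F) (B : ℝ), (∀ k, ContinuousOn (b k) (Ici s)) →
    (∀ k, ∀ t ∈ Ici s, ‖b k t‖ ≤ B) →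
    ∀ k, ContinuousOn (fun t => G t (fun j => b j t) k) (Ici s)

theorem IsDampedSystem.norm_coupling_le (h : IsDampedSystem s ρ G) {x : α → F} {B : ℝ}
    (hx : ∀ j, ‖x j‖ ≤ B) (ht : t ∈ Ici s) (k : α) : ‖G t x k‖ ≤ B / 2 * ρ k t := by
  have h0 (j : α) : ‖(0 : α → F) j‖ ≤ B := by
    simpa using (norm_nonneg (x j)).trans (hx j)
  simpa [h.map_zero t ht k] using
    h.norm_sub_le t ht x 0 B B hx h0 (fun j => by simpa using hx j) k

variable [InnerProductSpace ℝ F]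

theorem norm_le_of_hasDerivWithinAt_damped {b G : ℝ → F} {ρ : ℝ → ℝ} {A : ℝ}
    (hb : ∀ r ∈ Icc s t, HasDerivWithinAt b (G r - ρ r • b r) (Ici s) r)
    (hρ : ∀ r ∈ Icc s t, 0 < ρ r) (hG : ∀ r ∈ Icc s t, ‖G r‖ ≤ A * ρ r) (hs : ‖b s‖ ≤ A)
    (hst : s ≤ t) : ‖b t‖ ≤ A := by
  refine le_of_forall_gt_imp_ge_of_dense fun B hAB => ?_
  have hA : 0 ≤ A := (norm_nonneg _).trans hs
  have hsq (r : ℝ) (hr : r ∈ Icc s t) :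
      HasDerivWithinAt (fun r => ‖b r‖ ^ 2) (2 * inner ℝ (b r) (G r - ρ r • b r)) (Ici s) r :=
    (hb r hr).norm_sq
  refine abs_le_of_sq_le_sq' ?_ (hA.trans hAB.le) |>.2
  refine image_le_of_deriv_right_lt_deriv_boundary (B := fun _ => B ^ 2) (B' := 0)
    (fun r hr => (hsq r hr).continuousWithinAt.mono Icc_subset_Ici_self)
    (fun r hr => (hsq r (Ico_subset_Icc_self hr)).mono (Ici_subset_Ici.2 hr.1))
    (pow_le_pow_left₀ (norm_nonneg _) (hs.trans hAB.le) 2) (fun r => hasDerivAt_const r _)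
    (fun r hr hrB => ?_) ⟨hst, le_rfl⟩
  have hr := Ico_subset_Icc_self hr
  have hnorm : ‖b r‖ = B := (pow_left_inj₀ (norm_nonneg _) (hA.trans hAB.le) two_ne_zero).1 hrB
  have hinner : inner ℝ (b r) (G r) ≤ B * (A * ρ r) :=
    (real_inner_le_norm _ _).trans (by rw [hnorm]; gcongr; exacts [hA.trans hAB.le, hG r hr])
  rw [inner_sub_right, real_inner_smul_right, real_inner_self_eq_norm_sq, hnorm, Pi.zero_apply]
  nlinarith [mul_pos (mul_pos (hA.trans_lt hAB) (hρ r hr)) (sub_pos.2 hAB)]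

/-- The solution `exp (-∫_s^t ρ) (g + ∫_s^t exp (∫_s^r ρ) G(r) dr)` of `b' = G - ρ b`,
`b(s) = g`. -/
noncomputable def duhamel (ρ : ℝ → ℝ) (s : ℝ) (g : F) (G : ℝ → F) (t : ℝ) : F :=
  exp (-∫ r in s..t, ρ r) • (g + ∫ r in s..t, exp (∫ q in s..r, ρ q) • G r)

theorem duhamel_self (ρ : ℝ → ℝ) (s : ℝ) (g : F) (G : ℝ → F) : duhamel ρ s g G s = g := by
  simp [duhamel]

theorem hasDerivAt_duhamel [CompleteSpace F] {ρ : ℝ → ℝ} {G : ℝ → F} (hρ : Continuous ρ)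
    (hG : Continuous G) (s t : ℝ) (g : F) :
    HasDerivAt (duhamel ρ s g G) (G t - ρ t • duhamel ρ s g G t) t := by
  have hrate (r : ℝ) : HasDerivAt (fun r => ∫ q in s..r, ρ q) (ρ r) r :=
    (hρ.integral_hasStrictDerivAt s r).hasDerivAt
  have hcont : Continuous fun r => exp (∫ q in s..r, ρ q) • G r :=
    (continuous_exp.comp (continuous_iff_continuousAt.2 fun r => (hrate r).continuousAt)).smul hG
  have h := (hrate t).fun_neg.exp.smul
    ((hcont.integral_hasStrictDerivAt s t).hasDerivAt.const_add g)
  refine h.congr_deriv ?_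
  rw [smul_smul, ← exp_add, neg_add_cancel, exp_zero, one_smul, mul_neg, neg_smul, mul_comm,
    mul_smul, ← sub_eq_add_neg, duhamel]

namespace IsDampedSystem

variable [TopologicalSpace α]

open scoped BoundedContinuousFunction

/-- One step of the fixed-point iteration: the equation for `b_k` is solved with coupling
`G_k(t, b)` computed from the previous iterate. Times before `s` are replaced by `s`, so that
iterates are bounded functions on `α × ℝ`. -/
noncomputable def iterate (s : ℝ) (ρ : α → ℝ → ℝ) (G : ℝ → (α → F) → α → F) (g : α → F)
    (b : α × ℝ →ᵇ F) (k : α) (t : ℝ) : F :=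
  duhamel (fun r => ρ k (max r s)) s (g k)
    (fun r => G (max r s) (fun j => b (j, max r s)) k) t

theorem iterate_self (g : α → F) (b : α × ℝ →ᵇ F) (k : α) : iterate s ρ G g b k s = g k :=
  duhamel_self _ _ _ _

variable [CompleteSpace F]

theorem hasDerivAt_iterate (h : IsDampedSystem s ρ G) (g : α → F) (b : α × ℝ →ᵇ F) (k : α)
    (t : ℝ) :
    HasDerivAt (iterate s ρ G g b k) (G (max t s) (fun j => b (j, max t s)) k -
      ρ k (max t s) • iterate s ρ G g b k t) t := by
  have hmax : Continuous fun r : ℝ => max r s := by fun_prop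
  have hmem (r : ℝ) : max r s ∈ Ici s := le_max_right r s
  refine hasDerivAt_duhamel ((h.continuousOn_rate k).comp_continuous hmax hmem)
    ((h.continuousOn_coupling (fun j t => b (j, t)) ‖b‖ (fun j => ?_)
      (fun j t _ => b.norm_coe_le_norm _) k).comp_continuous hmax hmem) s t (g k)
  exact (b.continuous.comp (by fun_prop : Continuous fun t : ℝ => (j, t))).continuousOn

theorem hasDerivWithinAt_iterate (h : IsDampedSystem s ρ G) (g : α → F) (b : α × ℝ →ᵇ F) (k : α)
    (ht : t ∈ Ici s) :
    HasDerivWithinAt (iterate s ρ G g b k)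
      (G t (fun j => b (j, t)) k - ρ k t • iterate s ρ G g b k t) (Ici s) t := by
  simpa only [max_eq_left (mem_Ici.1 ht)] using (h.hasDerivAt_iterate g b k t).hasDerivWithinAt

theorem norm_iterate_le (h : IsDampedSystem s ρ G) {g : α → F} {C : ℝ} (hg : ∀ k, ‖g k‖ ≤ C)
    (b : α × ℝ →ᵇ F) (k : α) (ht : t ∈ Ici s) : ‖iterate s ρ G g b k t‖ ≤ max C ‖b‖ := by
  refine norm_le_of_hasDerivWithinAt_damped
    (fun r hr => h.hasDerivWithinAt_iterate g b k hr.1) (fun r hr => h.rate_pos k r hr.1)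
    (fun r hr => (h.norm_coupling_le (fun j => b.norm_coe_le_norm (j, r)) hr.1 k).trans ?_) ?_ ht
  · have := (h.rate_pos k r hr.1).le
    gcongr
    exact (half_le_self (norm_nonneg b)).trans (le_max_right _ _)
  · rw [iterate_self]
    exact (hg k).trans (le_max_left _ _)

theorem norm_iterate_sub_iterate_le (h : IsDampedSystem s ρ G) (g : α → F) (b b' : α × ℝ →ᵇ F)
    (k : α) (ht : t ∈ Ici s) :
    ‖iterate s ρ G g b k t - iterate s ρ G g b' k t‖ ≤ ‖b - b'‖ / 2 := by
  refine norm_le_of_hasDerivWithinAt_damped (b := iterate s ρ G g b k - iterate s ρ G g b' k)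
    (G := fun r => G r (fun j => b (j, r)) k - G r (fun j => b' (j, r)) k)
    (fun r hr => ((h.hasDerivWithinAt_iterate g b k hr.1).sub
      (h.hasDerivWithinAt_iterate g b' k hr.1)).congr_deriv ?_)
    (fun r hr => h.rate_pos k r hr.1) (fun r hr => h.norm_sub_le r hr.1 _ _ (max ‖b‖ ‖b'‖) _
      (fun j => (b.norm_coe_le_norm _).trans (le_max_left _ _))
      (fun j => (b'.norm_coe_le_norm _).trans (le_max_right _ _))
      (fun j => (b - b').norm_coe_le_norm (j, r)) k) ?_ ht
  · rw [Pi.sub_apply, smul_sub]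
    abel
  · rw [Pi.sub_apply, iterate_self, iterate_self, sub_self, norm_zero]
    positivity

theorem exists_isFixedPt_iterate [DiscreteTopology α] (h : IsDampedSystem s ρ G) {g : α → F}
    {C : ℝ} (hg : ∀ k, ‖g k‖ ≤ C) :
    ∃ b : α × ℝ →ᵇ F, ∀ k t, b (k, t) = iterate s ρ G g b k (max t s) := by
  have hcont (b : α × ℝ →ᵇ F) :
      Continuous fun p : α × ℝ => iterate s ρ G g b p.1 (max p.2 s) := by
    refine continuous_prod_of_discrete_left.2 fun k => Continuous.comp
      (g := iterate s ρ G g b k) ?_ (by fun_prop : Continuous fun t : ℝ => max t s)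
    exact continuous_iff_continuousAt.2 fun t => (h.hasDerivAt_iterate g b k t).continuousAt
  let Φ (b : α × ℝ →ᵇ F) : α × ℝ →ᵇ F :=
    .ofNormedAddCommGroup _ (hcont b) (max C ‖b‖)
      fun p => h.norm_iterate_le hg b p.1 (le_max_right p.2 s)
  have hΦ : ContractingWith 2⁻¹ Φ := by
    refine ⟨by norm_num, LipschitzWith.of_dist_le_mul fun b b' => ?_⟩
    rw [BoundedContinuousFunction.dist_le (by positivity)]
    intro p
    rw [dist_eq_norm, dist_eq_norm, NNReal.coe_inv, NNReal.coe_ofNat, inv_mul_eq_div]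
    exact h.norm_iterate_sub_iterate_le g b b' p.1 (le_max_right p.2 s)
  exact ⟨hΦ.fixedPoint, fun k t => (DFunLike.congr_fun hΦ.fixedPoint_isFixedPt (k, t)).symm⟩

theorem exists_solution [DiscreteTopology α] (h : IsDampedSystem s ρ G) {g : α → F} {C : ℝ}
    (hg : ∀ k, ‖g k‖ ≤ C) :
    ∃ (b : α → ℝ → F) (B : ℝ), (∀ k t, ‖b k t‖ ≤ B) ∧ (∀ k, b k s = g k) ∧
      ∀ k, ∀ t ∈ Ici s,
        HasDerivWithinAt (b k) (G t (fun j => b j t) k - ρ k t • b k t) (Ici s) t := by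
  obtain ⟨b, hb⟩ := h.exists_isFixedPt_iterate hg
  have hb' (k : α) (t : ℝ) (ht : t ∈ Ici s) : b (k, t) = iterate s ρ G g b k t := by
    rw [hb, max_eq_left (mem_Ici.1 ht)]
  refine ⟨fun k t => b (k, t), ‖b‖, fun k t => b.norm_coe_le_norm _, fun k => ?_,
    fun k t ht => ?_⟩
  · exact (hb' k s self_mem_Ici).trans (iterate_self g b k)
  · refine ((h.hasDerivWithinAt_iterate g b k ht).congr (hb' k) (hb' k t ht)).congr_deriv ?_
    rw [← hb' k t ht]

end IsDampedSystem

end Damped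

/-! ### Advection–diffusion in Fourier coefficients -/

section FourierEvolution

variable {ι : Type*} [Fintype ι] {s t κ : ℝ} {N : ℕ} {a b : (ι → ℤ) → ℝ → ℂ}

theorem ContinuousDecay.summable_weighted_norm (ha : ContinuousDecay s a) (N : ℕ)
    (ht : t ∈ Ici s) : Summable fun m => (1 + ‖m‖) ^ N * ‖a m t‖ := by
  obtain ⟨u, hu, hau⟩ := (ha.rapidDecayOn t).exists_summable_bound N
  exact hu.of_nonneg_of_le (fun m => by positivity) (hau t ⟨ht, le_rfl⟩)

theorem ContinuousDecay.continuousOn_tsum_weighted_norm (ha : ContinuousDecay s a) (N : ℕ) :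
    ContinuousOn (fun t => ∑' m, (1 + ‖m‖) ^ N * ‖a m t‖) (Ici s) := by
  refine continuousOn_tsum_Ici
    (fun m => continuousOn_const.mul (ha.continuousOn m).norm) fun T => ?_
  obtain ⟨u, hu, hau⟩ := (ha.rapidDecayOn T).exists_summable_bound N
  refine ⟨u, hu, fun t ht m => ?_⟩
  rw [norm_of_nonneg (by positivity)]
  exact hau t ht m

theorem weighted_norm_mul_derivSymbol_mul_le {w : ℂ} {M : ℝ} (k j : ι → ℤ)
    (hw : (1 + ‖j‖) ^ N * ‖w‖ ≤ M) (z : ℂ) (i : ι) :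
    (1 + ‖k‖) ^ N * ‖z * (derivSymbol i j * w)‖ ≤
      M * (1 + ‖k‖) * (2 * π * ((1 + ‖k - j‖) ^ (N + 1) * ‖z‖)) := by
  have hj : 1 + ‖j‖ ≤ (1 + ‖k - j‖) * (1 + ‖k‖) := norm_sub_rev k j ▸ one_add_norm_le_mul j k
  calc (1 + ‖k‖) ^ N * ‖z * (derivSymbol i j * w)‖
      = (1 + ‖k‖) ^ N * (‖z‖ * (‖derivSymbol i j‖ * ‖w‖)) := by rw [norm_mul, norm_mul]
    _ ≤ ((1 + ‖k - j‖) * (1 + ‖j‖)) ^ N *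
          (‖z‖ * (2 * π * ((1 + ‖k - j‖) * (1 + ‖k‖)) * ‖w‖)) := by
        gcongr
        · exact one_add_norm_le_mul k j
        · exact (norm_derivSymbol_le i j).trans (by gcongr)
    _ = (1 + ‖j‖) ^ N * ‖w‖ * (1 + ‖k‖) * (2 * π * ((1 + ‖k - j‖) ^ (N + 1) * ‖z‖)) := by
        rw [mul_pow]
        ring
    _ ≤ _ := by gcongr

variable {U : ι → (ι → ℤ) → ℝ → ℂ} {x y : (ι → ℤ) → ℂ} {B M : ℝ}

/-- The Fourier coefficients of `∑ i, u_i ∂_i f` in terms of the coefficients `U i` of `u_i` and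
`x` of `f`. -/
noncomputable def transport (U : ι → (ι → ℤ) → ℝ → ℂ) (t : ℝ) (x : (ι → ℤ) → ℂ) (k : ι → ℤ) : ℂ :=
  ∑ i, ∑' j, U i (k - j) t * (derivSymbol i j * x j)

/-- The factor by which `transport U t` grows bounds of weight `(1 + ‖k‖) ^ N`, up to the loss of
one power of `1 + ‖k‖`. -/
noncomputable def transportSize (U : ι → (ι → ℤ) → ℝ → ℂ) (N : ℕ) (t : ℝ) : ℝ :=
  ∑ i, 2 * π * ∑' m, (1 + ‖m‖) ^ (N + 1) * ‖U i m t‖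

theorem transportSize_nonneg : 0 ≤ transportSize U N t :=
  Finset.sum_nonneg fun _ _ => mul_nonneg two_pi_pos.le (tsum_nonneg fun _ => by positivity)

theorem continuousOn_transportSize (hU : ∀ i, ContinuousDecay s (U i)) (N : ℕ) :
    ContinuousOn (transportSize U N) (Ici s) :=
  continuousOn_finsetSum _ fun i _ =>
    ((hU i).continuousOn_tsum_weighted_norm (N + 1)).const_smul (2 * π)

theorem transport_zero (k : ι → ℤ) : transport U t 0 k = 0 := by simp [transport]

theorem transport_smul (c : ℝ) (x : (ι → ℤ) → ℂ) (k : ι → ℤ) :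
    transport U t (fun j => c • x j) k = c • transport U t x k := by
  simp only [transport, mul_smul_comm, tsum_const_smul'', Finset.smul_sum]

theorem summable_weighted_transport (hU : ∀ i, ContinuousDecay s (U i)) (N : ℕ) (ht : t ∈ Ici s)
    (k : ι → ℤ) (i : ι) : Summable fun j => 2 * π * ((1 + ‖k - j‖) ^ (N + 1) * ‖U i (k - j) t‖) :=
  ((Equiv.subLeft k).summable_iff.2 ((hU i).summable_weighted_norm (N + 1) ht)).mul_left _

theorem summable_transport (hU : ∀ i, ContinuousDecay s (U i)) (hx : ∀ j, ‖x j‖ ≤ B)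
    (ht : t ∈ Ici s) (k : ι → ℤ) (i : ι) :
    Summable fun j => U i (k - j) t * (derivSymbol i j * x j) := by
  refine .of_norm_bounded ((summable_weighted_transport hU 0 ht k i).mul_left (B * (1 + ‖k‖)))
    fun j => ?_
  simpa using weighted_norm_mul_derivSymbol_mul_le (N := 0) k j (by simpa using hx j) _ i

theorem norm_transport_le (hU : ∀ i, ContinuousDecay s (U i)) (ht : t ∈ Ici s)
    (hx : ∀ j, (1 + ‖j‖) ^ N * ‖x j‖ ≤ M) (k : ι → ℤ) :
    (1 + ‖k‖) ^ N * ‖transport U t x k‖ ≤ M * (1 + ‖k‖) * transportSize U N t := by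
  have hsum (i : ι) := (summable_weighted_transport hU N ht k i).mul_left (M * (1 + ‖k‖))
  have hterm (i : ι) (j : ι → ℤ) :=
    weighted_norm_mul_derivSymbol_mul_le k j (hx j) (U i (k - j) t) i
  have hshift (i : ι) : ∑' j, (1 + ‖k - j‖) ^ (N + 1) * ‖U i (k - j) t‖ =
      ∑' m, (1 + ‖m‖) ^ (N + 1) * ‖U i m t‖ :=
    (Equiv.subLeft k).tsum_eq fun m => (1 + ‖m‖) ^ (N + 1) * ‖U i m t‖
  have hnorm (i : ι) : Summable fun j =>
      (1 + ‖k‖) ^ N * ‖U i (k - j) t * (derivSymbol i j * x j)‖ :=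
    (hsum i).of_nonneg_of_le (fun j => by positivity) (hterm i)
  calc (1 + ‖k‖) ^ N * ‖transport U t x k‖
      ≤ (1 + ‖k‖) ^ N * ∑ i, ∑' j, ‖U i (k - j) t * (derivSymbol i j * x j)‖ := by
        gcongr
        refine norm_sum_le_of_le _ fun i _ => norm_tsum_le_tsum_norm ?_
        exact (summable_mul_left_iff (by positivity)).1 (hnorm i)
    _ = ∑ i, ∑' j, (1 + ‖k‖) ^ N * ‖U i (k - j) t * (derivSymbol i j * x j)‖ := by
        simp only [Finset.mul_sum, tsum_mul_left]
    _ ≤ ∑ i, ∑' j, M * (1 + ‖k‖) * (2 * π * ((1 + ‖k - j‖) ^ (N + 1) * ‖U i (k - j) t‖)) :=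
        Finset.sum_le_sum fun i _ => (hnorm i).tsum_le_tsum (hterm i) (hsum i)
    _ = M * (1 + ‖k‖) * transportSize U N t := by
        simp only [transportSize, tsum_mul_left, hshift, Finset.mul_sum]

theorem transport_sub (hU : ∀ i, ContinuousDecay s (U i)) (hx : ∀ j, ‖x j‖ ≤ B)
    (hy : ∀ j, ‖y j‖ ≤ B) (ht : t ∈ Ici s) (k : ι → ℤ) :
    transport U t (fun j => x j - y j) k = transport U t x k - transport U t y k := by
  simp only [transport, mul_sub, ← Finset.sum_sub_distrib]
  exact Finset.sum_congr rfl fun i _ =>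
    (summable_transport hU hx ht k i).tsum_sub (summable_transport hU hy ht k i)

theorem continuousOn_transport (hU : ∀ i, ContinuousDecay s (U i))
    (hb : ∀ k, ContinuousOn (b k) (Ici s)) (hB : ∀ k, ∀ t ∈ Ici s, ‖b k t‖ ≤ B) (k : ι → ℤ) :
    ContinuousOn (fun t => transport U t (fun j => b j t) k) (Ici s) := by
  refine continuousOn_finsetSum _ fun i _ => continuousOn_tsum_Ici
    (fun j => ((hU i).continuousOn _).mul (continuousOn_const.mul (hb j))) fun T => ?_
  obtain ⟨u, hu, hUu⟩ := ((hU i).rapidDecayOn T).exists_summable_bound 1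
  refine ⟨fun j => B * (1 + ‖k‖) * (2 * π * u (k - j)),
    (((Equiv.subLeft k).summable_iff.2 hu).mul_left _).mul_left _, fun t ht j => ?_⟩
  have hbj := hB j t ht.1
  have hB0 : 0 ≤ B := (norm_nonneg _).trans hbj
  have h := weighted_norm_mul_derivSymbol_mul_le (N := 0) k j (by simpa using hbj)
    (U i (k - j) t) i
  rw [pow_zero, one_mul] at h
  refine h.trans (mul_le_mul_of_nonneg_left ?_ (by positivity))
  exact mul_le_mul_of_nonneg_left (hUu t ht (k - j)) two_pi_pos.le

/-- The Fourier multiplier of `-κΔ`. -/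
noncomputable def dissipationRate (κ : ℝ) (k : ι → ℤ) : ℝ := κ * ∑ i, ‖derivSymbol i k‖ ^ 2

theorem mul_norm_sq_le_dissipationRate (hκ : 0 ≤ κ) (k : ι → ℤ) :
    κ * ‖k‖ ^ 2 ≤ dissipationRate κ k := by
  refine mul_le_mul_of_nonneg_left ?_ hκ
  refine (le_sqrt (norm_nonneg k) (by positivity)).1 ?_
  refine (pi_norm_le_iff_of_nonneg (sqrt_nonneg _)).2 fun i => ?_
  refine le_sqrt_of_sq_le (le_trans ?_ (Finset.single_le_sum
    (f := fun i => ‖derivSymbol i k‖ ^ 2) (fun i _ => by positivity) (Finset.mem_univ i)))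
  rw [norm_derivSymbol]
  gcongr
  exact le_mul_of_one_le_left (norm_nonneg _) (by linarith [pi_gt_three])

theorem neg_dissipationRate (κ : ℝ) (k : ι → ℤ) :
    (-dissipationRate κ k : ℂ) = κ * ∑ i, derivSymbol i k * derivSymbol i k := by
  have hsq (i : ι) : derivSymbol i k * derivSymbol i k = -((‖derivSymbol i k‖ ^ 2 : ℝ) : ℂ) := by
    rw [norm_derivSymbol, Int.norm_eq_abs, mul_pow, sq_abs, derivSymbol]
    push_cast
    linear_combination (2 * π * (k i : ℂ)) ^ 2 * Complex.I_mul_I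
  simp only [hsq, dissipationRate, Finset.sum_neg_distrib]
  push_cast
  ring

theorem polynomialGrowth_dissipationRate (κ : ℝ) :
    PolynomialGrowth fun k : ι → ℤ => (dissipationRate κ k : ℂ) := by
  refine ⟨|κ| * ∑ _i : ι, (2 * π) ^ 2, 2, by positivity, fun k => ?_⟩
  have hnonneg : 0 ≤ ∑ i, ‖derivSymbol i k‖ ^ 2 := by positivity
  rw [Complex.norm_real, dissipationRate, norm_mul, norm_eq_abs, norm_of_nonneg hnonneg, mul_assoc,
    Finset.sum_mul]
  gcongr with i
  rw [← mul_pow]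
  gcongr
  exact norm_derivSymbol_le i k

/-- An exponential rate that, added to the dissipation, dominates the transport term. -/
noncomputable def excessRate (κ : ℝ) (U : ι → (ι → ℤ) → ℝ → ℂ) (t : ℝ) : ℝ :=
  κ + 2 * transportSize U 0 t + transportSize U 0 t ^ 2 / κ

theorem le_excessRate (hκ : 0 ≤ κ) : κ ≤ excessRate κ U t := by
  have := transportSize_nonneg (U := U) (N := 0) (t := t)
  unfold excessRate
  linarith [show 0 ≤ transportSize U 0 t ^ 2 / κ by positivity]

theorem continuousOn_excessRate (hU : ∀ i, ContinuousDecay s (U i)) :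
    ContinuousOn (excessRate κ U) (Ici s) := by
  have := continuousOn_transportSize hU 0
  unfold excessRate
  fun_prop

theorem two_mul_transportSize_le (hκ : 0 < κ) (k : ι → ℤ) :
    2 * ((1 + ‖k‖) * transportSize U 0 t) ≤ dissipationRate κ k + excessRate κ U t := by
  have hsq : 0 ≤ (κ * ‖k‖ - transportSize U 0 t) ^ 2 / κ := by positivity
  have hexpand : (κ * ‖k‖ - transportSize U 0 t) ^ 2 / κ =
      κ * ‖k‖ ^ 2 - 2 * (‖k‖ * transportSize U 0 t) + transportSize U 0 t ^ 2 / κ := by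
    field_simp
    ring
  unfold excessRate
  linarith [mul_norm_sq_le_dissipationRate hκ.le k]

theorem half_mul_one_add_norm_sq_le (hκ : 0 ≤ κ) (k : ι → ℤ) :
    κ / 2 * (1 + ‖k‖) ^ 2 ≤ dissipationRate κ k + excessRate κ U t := by
  linarith [mul_norm_sq_le_dissipationRate hκ k, le_excessRate (U := U) (t := t) hκ,
    mul_nonneg hκ (sq_nonneg (1 - ‖k‖))]

theorem isDampedSystem_transport (hκ : 0 < κ) (hU : ∀ i, ContinuousDecay s (U i)) :
    IsDampedSystem s (fun k t => dissipationRate κ k + excessRate κ U t)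
      (fun t x k => -transport U t x k) where
  rate_pos k t _ :=
    (show 0 < κ / 2 * (1 + ‖k‖) ^ 2 by positivity).trans_le (half_mul_one_add_norm_sq_le hκ.le k)
  continuousOn_rate k := continuousOn_const.add (continuousOn_excessRate hU)
  map_zero t _ k := by rw [transport_zero, neg_zero]
  norm_sub_le t ht x y B M hx hy hxy k := by
    have hM : 0 ≤ M := (norm_nonneg _).trans (hxy 0)
    have h := norm_transport_le (N := 0) hU ht (by simpa using hxy) k
    rw [transport_sub hU hx hy ht, pow_zero, one_mul] at h
    rw [neg_sub_neg, norm_sub_rev]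
    linarith [mul_le_mul_of_nonneg_left (two_mul_transportSize_le (U := U) (t := t) hκ k) hM]
  continuousOn_coupling b B hb hB k := (continuousOn_transport hU hb hB k).neg

theorem norm_transport_le_mul_rate {A S : ℝ} (hκ : 0 < κ) (hU : ∀ i, ContinuousDecay s (U i))
    (ht : t ∈ Ici s) (hx : ∀ j, (1 + ‖j‖) ^ N * ‖x j‖ ≤ M) (hS : transportSize U N t ≤ S)
    (hA : 2 * M * S ≤ A * κ) (hA0 : 0 ≤ A) (k : ι → ℤ) :
    ‖transport U t x k‖ ≤
      A / (1 + ‖k‖) ^ (N + 1) * (dissipationRate κ k + excessRate κ U t) := by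
  have hM : 0 ≤ M := (by positivity : (0 : ℝ) ≤ _).trans (hx 0)
  calc ‖transport U t x k‖
      ≤ M * (1 + ‖k‖) * S / (1 + ‖k‖) ^ N := by
        rw [le_div_iff₀' (by positivity)]
        exact (norm_transport_le hU ht hx k).trans (by gcongr)
    _ = 2 * M * S / (1 + ‖k‖) ^ (N + 1) * (1 / 2 * (1 + ‖k‖) ^ 2) := by
        rw [pow_succ]
        field_simp
    _ ≤ A * κ / (1 + ‖k‖) ^ (N + 1) * (1 / 2 * (1 + ‖k‖) ^ 2) := by gcongr
    _ = A / (1 + ‖k‖) ^ (N + 1) * (κ / 2 * (1 + ‖k‖) ^ 2) := by ring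
    _ ≤ _ := by
        gcongr
        exact half_mul_one_add_norm_sq_le hκ.le k

theorem rapidDecayOn_of_hasDerivWithinAt (hκ : 0 < κ) (hU : ∀ i, ContinuousDecay s (U i))
    (hb : ∀ k, ∀ t ∈ Ici s, HasDerivWithinAt (b k)
      (-transport U t (fun j => b j t) k - (dissipationRate κ k + excessRate κ U t) • b k t)
      (Ici s) t)
    (hs : RapidDecayOn {s} b) (hB : ∀ k t, ‖b k t‖ ≤ B) (T : ℝ) : RapidDecayOn (Icc s T) b := by
  intro N
  induction N with
  | zero => exact ⟨B, fun t _ k => by simpa using hB k t⟩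
  | succ N ih =>
    obtain ⟨C, hC⟩ := ih
    obtain ⟨C₀, hC₀⟩ := hs (N + 1)
    obtain ⟨S, hS⟩ := isCompact_Icc.exists_bound_of_continuousOn
      ((continuousOn_transportSize hU N).mono (Icc_subset_Ici_self : Icc s T ⊆ Ici s))
    refine ⟨max C₀ (2 * C * S / κ), fun t ht k => ?_⟩
    set A := max C₀ (2 * C * S / κ)
    have hpow (n : ℕ) : 0 < (1 + ‖k‖) ^ n := by positivity
    suffices h : ‖b k t‖ ≤ A / (1 + ‖k‖) ^ (N + 1) from (le_div_iff₀' (hpow _)).1 h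
    refine norm_le_of_hasDerivWithinAt_damped (fun r hr => hb k r hr.1)
      (fun r hr => (isDampedSystem_transport hκ hU).rate_pos k r hr.1) (fun r hr => ?_)
      ((le_div_iff₀' (hpow _)).2 ((hC₀ s rfl k).trans (le_max_left _ _))) ht.1
    have hrT : r ∈ Icc s T := ⟨hr.1, hr.2.trans ht.2⟩
    rw [norm_neg]
    refine norm_transport_le_mul_rate hκ hU hr.1 (hC r hrT) ((le_norm_self _).trans (hS r hrT))
      ((div_le_iff₀ hκ).1 (le_max_right _ _)) ?_ k
    exact (by positivity : (0 : ℝ) ≤ _).trans ((hC₀ s rfl 0).trans (le_max_left _ _))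

theorem RapidDecayOn.smul_of_isCompact {J : Set ℝ} {f : ℝ → ℝ} (hb : RapidDecayOn J b)
    (hJ : IsCompact J) (hf : ContinuousOn f J) : RapidDecayOn J fun k t => f t • b k t := by
  intro N
  obtain ⟨C, hC⟩ := hb N
  obtain ⟨B, hB⟩ := hJ.exists_bound_of_continuousOn hf
  refine ⟨B * C, fun t ht k => ?_⟩
  have hB0 : 0 ≤ B := (norm_nonneg _).trans (hB t ht)
  calc (1 + ‖k‖) ^ N * ‖f t • b k t‖ = ‖f t‖ * ((1 + ‖k‖) ^ N * ‖b k t‖) := by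
        rw [norm_smul, mul_left_comm]
    _ ≤ B * C := by gcongr; exacts [hB t ht, hC t ht k]

theorem exists_hasDerivWithinAt_Ici_of_continuousOn {f : ℝ → ℝ} (hf : ContinuousOn f (Ici s)) :
    ∃ F : ℝ → ℝ, F s = 0 ∧ ∀ t ∈ Ici s, HasDerivWithinAt F (f t) (Ici s) t := by
  have hcont : Continuous fun t => f (max t s) :=
    hf.comp_continuous (by fun_prop) fun t => le_max_right t s
  refine ⟨fun t => ∫ r in s..t, f (max r s), intervalIntegral.integral_same, fun t ht => ?_⟩
  simpa only [max_eq_left (mem_Ici.1 ht)] using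
    (hcont.integral_hasStrictDerivAt s t).hasDerivAt.hasDerivWithinAt

theorem exists_fourier_solution (hκ : 0 < κ) (hU : ∀ i, ContinuousDecay s (U i))
    {c : (ι → ℤ) → ℂ} (hc : RapidDecayOn {s} fun k _ => c k) :
    ∃ a, ContinuousDecay s a ∧ (∀ k, a k s = c k) ∧ ∀ k, ∀ t ∈ Ici s,
      HasDerivWithinAt (a k) (-dissipationRate κ k * a k t - transport U t (fun j => a j t) k)
        (Ici s) t := by
  obtain ⟨C, hC⟩ := hc 0
  obtain ⟨b, B, hB, hbs, hb⟩ := (isDampedSystem_transport hκ hU).exists_solution (g := c) (C := C)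
    fun k => by simpa using hC s rfl k
  have hdecay := rapidDecayOn_of_hasDerivWithinAt hκ hU hb
    (fun N => (hc N).imp fun C hC t ht k => by
      rw [mem_singleton_iff.1 ht, hbs]
      exact hC s rfl k) hB
  obtain ⟨Λ, hΛs, hΛ⟩ := exists_hasDerivWithinAt_Ici_of_continuousOn
    (continuousOn_excessRate (κ := κ) hU)
  have hexp : ContinuousOn (fun t => exp (Λ t)) (Ici s) := fun t ht =>
    (hΛ t ht).continuousWithinAt.rexp
  refine ⟨fun k t => exp (Λ t) • b k t,
    ⟨fun k => hexp.smul fun t ht => (hb k t ht).continuousWithinAt,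
    fun T => (hdecay T).smul_of_isCompact isCompact_Icc (hexp.mono Icc_subset_Ici_self)⟩,
    fun k => by simp [hΛs, hbs], fun k t ht => ?_⟩
  refine ((hΛ t ht).exp.smul (hb k t ht)).congr_deriv ?_
  rw [transport_smul]
  simp only [Complex.real_smul]
  push_cast
  ring

theorem SmoothDecay.evolution {n : ℕ} (ha : SmoothDecay s n a)
    (hU : ∀ i, SmoothDecay s n (U i)) :
    SmoothDecay s n fun k t => -dissipationRate κ k * a k t - transport U t (fun j => a j t) k := by
  have hneg : PolynomialGrowth fun _ : ι → ℤ => (-1 : ℂ) := ⟨1, 0, zero_le_one, by simp⟩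
  have hsum := SmoothDecay.sum Finset.univ fun i _ =>
    (hU i).convolution (ha.multiplier (polynomialGrowth_derivSymbol i))
  have h := ((ha.multiplier (polynomialGrowth_dissipationRate κ)).add hsum).multiplier hneg
  convert h using 3 with k t
  rw [transport]
  simp only [latticeConvolution]
  ring

theorem smoothDecay_of_hasDerivWithinAt (hU : ∀ n i, SmoothDecay s n (U i))
    (ha : ContinuousDecay s a)
    (hd : ∀ k, ∀ t ∈ Ici s, HasDerivWithinAt (a k)
      (-dissipationRate κ k * a k t - transport U t (fun j => a j t) k) (Ici s) t) (n : ℕ) :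
    SmoothDecay s n a := by
  induction n with
  | zero => exact ha
  | succ n ih => exact ⟨ha, _, hd, ih.evolution (hU n)⟩

theorem ContinuousDecay.hasSum_synthesis (ha : ContinuousDecay s a) (ht : t ∈ Ici s) (x : ι → ℝ) :
    HasSum (fun k => a k t * character k x) (synthesis a t x) :=
  (ha.summable_mul_character ht x).hasSum

theorem synthesis_evolution (hU : ∀ i, ContinuousDecay s (U i)) (ha : ContinuousDecay s a)
    (ht : t ∈ Ici s) (x : ι → ℝ) :
    synthesis (fun k t => -dissipationRate κ k * a k t - transport U t (fun j => a j t) k) t x =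
      κ * ∑ i, synthesis (fun k t => derivSymbol i k * (derivSymbol i k * a k t)) t x -
        ∑ i, synthesis (U i) t x * synthesis (fun k t => derivSymbol i k * a k t) t x := by
  have hD (i : ι) := ha.multiplier (polynomialGrowth_derivSymbol i)
  have hDD (i : ι) := (hD i).multiplier (polynomialGrowth_derivSymbol i)
  simp only [← (hU _).synthesis_convolution (hD _) ht]
  have hdiff := hasSum_sum fun i (_ : i ∈ Finset.univ) => (hDD i).hasSum_synthesis ht x
  have hadv := hasSum_sum fun i (_ : i ∈ Finset.univ) =>
    ((hU i).convolution (hD i)).hasSum_synthesis ht x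
  rw [← ((hdiff.mul_left (κ : ℂ)).sub hadv).tsum_eq, synthesis]
  refine tsum_congr fun k => ?_
  simp only [neg_dissipationRate, transport, latticeConvolution, sub_mul, Finset.sum_mul,
    Finset.mul_sum, mul_assoc]

end FourierEvolution

/-! ### Solvability of the advection–diffusion equation -/

section Existence

variable {d : ℕ} {s t κ : ℝ} {v : ℝ → (Fin d → ℝ) → Fin d → ℝ} {g : (Fin d → ℝ) → ℝ}
  {a : (Fin d → ℤ) → ℝ → ℂ}

theorem ContinuousDecay.pd_re_synthesis (ha : ContinuousDecay s a) (ht : t ∈ Ici s) (i : Fin d)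
    (x : Fin d → ℝ) :
    pd d i (fun x => (synthesis a t x).re) x =
      (synthesis (fun k t => derivSymbol i k * a k t) t x).re := by
  have h : HasFDerivAt (fun x => (synthesis a t x).re) _ x :=
    Complex.reCLM.hasFDerivAt.comp x (ha.hasFDerivAt_synthesis ht x).differentiableAt.hasFDerivAt
  rw [pd, h.fderiv, ← ha.fderiv_synthesis_single ht]
  rfl

theorem ContDiffOnSlab.ofReal_comp_smoothPeriodic (hv : ContDiffOnSlab ∞ (Ici s) v)
    (hper : ∀ t ∈ Ici s, ∀ i, PeriodicIn d fun x => v t x i) (i : Fin d) :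
    SmoothPeriodic s fun t x => (v t x i : ℂ) where
  contDiffOnSlab := Complex.ofRealCLM.contDiff.comp_contDiffOn (contDiffOn_pi.1 hv i)
  latticePeriodic t ht := (hper t ht i).latticePeriodic.map _

theorem isAdvectionDiffusion_re_synthesis {U : Fin d → (Fin d → ℤ) → ℝ → ℂ}
    (hU : ∀ i, ContinuousDecay s (U i))
    (hUv : ∀ i, ∀ t ∈ Ici s, ∀ x, synthesis (U i) t x = v t x i) (ha : ∀ n, SmoothDecay s n a)
    (hd : ∀ k, ∀ t ∈ Ici s, HasDerivWithinAt (a k)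
      (-dissipationRate κ k * a k t - transport U t (fun j => a j t) k) (Ici s) t) :
    IsAdvectionDiffusion (Ici s) κ v fun t x => (synthesis a t x).re where
  contDiffOnSlab := Complex.reCLM.contDiff.comp_contDiffOn
    (contDiffOn_infty.2 fun n => (ha n).contDiffOn_synthesis)
  periodic t _ := (latticePeriodic_synthesis a t).map Complex.re
  equation t ht x := by
    have hca := (ha 0).continuousDecay
    have hD (i : Fin d) := hca.multiplier (polynomialGrowth_derivSymbol i)
    have htime : derivWithin (fun r => (synthesis a r x).re) (Ici s) t = Complex.re _ :=
      (Complex.reCLM.hasFDerivAt.comp_hasDerivWithinAt t (hca.hasDerivWithinAt_synthesis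
        (SmoothDecay.evolution (n := 0) hca hU) hd ht x)).derivWithin (uniqueDiffOn_Ici s t ht)
    have hpd (i : Fin d) : pd d i (fun x => (synthesis a t x).re) = fun x => _ :=
      funext fun x => hca.pd_re_synthesis ht i x
    rw [htime, synthesis_evolution hU hca ht]
    simp only [lap, advection, hpd, (hD _).pd_re_synthesis ht, hUv _ t ht]
    simp

theorem exists_isAdvectionDiffusion (hκ : 0 < κ) (hv : ContDiffOnSlab ∞ (Ici s) v)
    (hper : ∀ t ∈ Ici s, ∀ i, PeriodicIn d fun x => v t x i) (hg : ContDiff ℝ ∞ g)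
    (hgper : PeriodicIn d g) :
    ∃ ζ, IsAdvectionDiffusion (Ici s) κ v ζ ∧ ζ s = g := by
  have hv' := hv.ofReal_comp_smoothPeriodic hper
  have hg' : SmoothPeriodic s fun _ x => (g x : ℂ) :=
    ⟨(Complex.ofRealCLM.contDiff.comp (hg.comp contDiff_snd)).contDiffOn,
      fun _ _ => hgper.latticePeriodic.map _⟩
  have hU (n : ℕ) (i : Fin d) := (hv' i).smoothDecay_cellFourierCoeff n
  obtain ⟨a, ha, has, hd⟩ := exists_fourier_solution hκ (fun i => (hU 0 i).continuousDecay)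
    (c := fun k => cellFourierCoeff (fun _ x => (g x : ℂ)) k s) fun N =>
      (hg'.rapidDecayOn_cellFourierCoeff s N).imp fun C hC _ _ k => hC s ⟨le_rfl, le_rfl⟩ k
  refine ⟨_, isAdvectionDiffusion_re_synthesis (fun i => (hU 0 i).continuousDecay)
    (fun i t ht => (hv' i).synthesis_cellFourierCoeff ht)
    (smoothDecay_of_hasDerivWithinAt hU ha hd) hd, funext fun x => ?_⟩
  have hsyn : synthesis a s x = g x := by
    rw [← hg'.synthesis_cellFourierCoeff (mem_Ici.2 le_rfl)]
    simp only [synthesis, has]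
  rw [hsyn, Complex.ofReal_re]

end Existence

/-! ### Time changes with prescribed speed on plateaus -/

section TimeChange

open scoped Manifold in
theorem exists_contDiff_ge_eqOn_const_of_locallyFinite {E ι : Type*} [NormedAddCommGroup E]
    [NormedSpace ℝ E] [FiniteDimensional ℝ E] {K : ι → Set E} (hclosed : ∀ i, IsClosed (K i))
    (hfin : LocallyFinite K) (hdisj : Pairwise (Function.onFun Disjoint K)) {φ : E → ℝ}
    (hφ : Continuous φ) {a : ι → ℝ} (ha : ∀ i, ∀ x ∈ K i, φ x < a i) :
    ∃ P : E → ℝ, ContDiff ℝ ∞ P ∧ (∀ x, φ x ≤ P x) ∧ ∀ i, ∀ x ∈ K i, P x = a i := by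
  let admissible : E → Set ℝ := fun x => {p | φ x ≤ p ∧ ∀ i, x ∈ K i → p = a i}
  have hconvex : ∀ x, Convex ℝ (admissible x) := fun x => by
    have : admissible x = Ici (φ x) ∩ ⋂ i, ⋂ _ : x ∈ K i, {a i} := by
      ext p; simp [admissible]
    rw [this]
    exact (convex_Ici _).inter (convex_iInter fun i => convex_iInter fun _ => convex_singleton _)
  have hlocal : ∀ x, ∃ c, ∀ᶠ y in 𝓝 x, c ∈ admissible y := fun x => by
    have haway : ∀ᶠ y in 𝓝 x, ∀ i, x ∉ K i → y ∉ K i := by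
      filter_upwards [hfin.iInter_compl_mem_nhds hclosed x] with y hy i hi
      exact mem_iInter₂.1 hy i hi
    by_cases hx : ∃ i, x ∈ K i
    · obtain ⟨i, hi⟩ := hx
      refine ⟨a i, ?_⟩
      filter_upwards [haway, hφ.continuousAt.eventually_lt_const (ha i x hi)] with y hy hlt
      refine ⟨hlt.le, fun j hj => congrArg a (by_contra fun hij => ?_)⟩
      exact hy j (disjoint_left.1 (hdisj hij) hi) hj
    · push Not at hx
      refine ⟨φ x + 1, ?_⟩
      filter_upwards [haway, hφ.continuousAt.eventually_lt_const (lt_add_one _)] with y hy hlt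
      exact ⟨hlt.le, fun j hj => absurd hj (hy j (hx j))⟩
  obtain ⟨P, hP⟩ := exists_contMDiffMap_forall_mem_convex_of_local_const (n := (⊤ : ℕ∞)) 𝓘(ℝ, E)
    hconvex hlocal
  exact ⟨P, P.contMDiff.contDiff, fun x => (hP x).1, fun i x hx => (hP x).2 i hx⟩

theorem locallyFinite_Icc_of_tendsto_atTop {ι : Type*} {l r : ι → ℝ}
    (hl : Tendsto l cofinite atTop) : LocallyFinite fun i => Icc (l i) (r i) := fun x => by
  refine ⟨Iio (x + 1), Iio_mem_nhds (lt_add_one x), (hl.eventually_ge_atTop (x + 1)).subset ?_⟩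
  rintro i ⟨y, hy, hyx⟩ hi
  exact absurd (hi.trans hy.1) (not_le.2 hyx)

variable {b t : ℝ} {ρ σ : ℝ → ℝ}

theorem hasDerivAt_integral_of_continuousOn_Iio (hρ : ContinuousOn ρ (Iio b)) {a : ℝ} (ha : a < b)
    (ht : t < b) : HasDerivAt (fun t => ∫ r in a..t, ρ r) (ρ t) t :=
  intervalIntegral.integral_hasDerivAt_right
    (hρ.mono fun _ hz => hz.2.trans_lt (max_lt ha ht)).intervalIntegrable
    (hρ.stronglyMeasurableAtFilter isOpen_Iio t ht) (hρ.continuousAt (Iio_mem_nhds ht))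

theorem log_sub_log_le_sub_of_hasDerivAt {a : ℝ} (hσ : ∀ t < b, HasDerivAt σ (ρ t) t)
    (hρ : ∀ t < b, (b - t)⁻¹ ≤ ρ t) (hat : a ≤ t) (htb : t < b) :
    log (b - a) - log (b - t) ≤ σ t - σ a := by
  have hlog : ∀ r < b, HasDerivAt (fun r => σ r + log (b - r)) (ρ r + -1 / (b - r)) r :=
    fun r hr => (hσ r hr).add (((hasDerivAt_id r).const_sub b).log (sub_pos.2 hr).ne')
  have hmono : MonotoneOn (fun r => σ r + log (b - r)) (Iio b) := by
    refine monotoneOn_of_hasDerivWithinAt_nonneg (convex_Iio b)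
      (fun r hr => (hlog r hr).continuousAt.continuousWithinAt)
      (fun r hr => (hlog r (interior_subset (s := Iio b) hr)).hasDerivWithinAt) fun r hr => ?_
    rw [neg_div, one_div]
    exact sub_nonneg.2 (hρ r (interior_subset (s := Iio b) hr))
  have := hmono (hat.trans_lt htb) htb hat
  simp only at this
  linarith

theorem strictMonoOn_Iio_of_hasDerivAt (hσ : ∀ t < b, HasDerivAt σ (ρ t) t)
    (hρ : ∀ t < b, 0 < ρ t) : StrictMonoOn σ (Iio b) :=
  strictMonoOn_of_hasDerivWithinAt_pos (convex_Iio b)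
    (fun t ht => (hσ t ht).continuousAt.continuousWithinAt)
    (fun t ht => (hσ t (interior_subset (s := Iio b) ht)).hasDerivWithinAt)
    fun t ht => hρ t (interior_subset (s := Iio b) ht)

theorem surjOn_Ico_Ici_of_hasDerivAt {a : ℝ} (hab : a < b) (hσ : ∀ t < b, HasDerivAt σ (ρ t) t)
    (hρ : ∀ t < b, (b - t)⁻¹ ≤ ρ t) : SurjOn σ (Ico a b) (Ici (σ a)) := fun y hy => by
  have hpos : 0 < (b - a) * rexp (-(y - σ a)) := mul_pos (sub_pos.2 hab) (exp_pos _)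
  let t := b - (b - a) * rexp (-(y - σ a))
  have htb : t < b := sub_lt_self b hpos
  have hat : a ≤ t := by
    have : (b - a) * rexp (-(y - σ a)) ≤ b - a :=
      mul_le_of_le_one_right (sub_pos.2 hab).le (exp_le_one_iff.2 (neg_nonpos.2 (sub_nonneg.2 hy)))
    linarith
  have hyt : y ≤ σ t := by
    have hlog : log (b - t) = log (b - a) - (y - σ a) := by
      rw [sub_sub_cancel, log_mul (sub_pos.2 hab).ne' (exp_pos _).ne', log_exp,
        ← sub_eq_add_neg]
    linarith [log_sub_log_le_sub_of_hasDerivAt hσ hρ hat htb]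
  have hcont : ContinuousOn σ (Icc a t) := fun r hr =>
    (hσ r (hr.2.trans_lt htb)).continuousAt.continuousWithinAt
  obtain ⟨r, hr, hry⟩ := intermediate_value_Icc hat hcont ⟨hy, hyt⟩
  exact ⟨r, ⟨hr.1, hr.2.trans_lt htb⟩, hry⟩

theorem contDiffOn_infty_Iio_of_hasDerivAt (hσ : ∀ t < b, HasDerivAt σ (ρ t) t)
    (hρ : ContDiffOn ℝ ∞ ρ (Iio b)) : ContDiffOn ℝ ∞ σ (Iio b) :=
  (contDiffOn_infty_iff_deriv_of_isOpen isOpen_Iio).2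
    ⟨fun t ht => (hσ t ht).differentiableAt.differentiableWithinAt,
      hρ.congr fun t ht => (hσ t ht).deriv⟩

/-- The time change `[0, ∞) → [0, 1)` whose inverse `t ↦ -log (1 - t)` has speed `1 / (1 - t)`. It
places the plateaus, which are unit spaced in the variable `y`, so that they accumulate at `1`. -/
noncomputable def expClock (y : ℝ) : ℝ := 1 - rexp (-y)

theorem expClock_strictMono : StrictMono expClock := fun _ _ h =>
  sub_lt_sub_left (exp_lt_exp.2 (neg_lt_neg h)) 1

theorem expClock_lt_one (y : ℝ) : expClock y < 1 := sub_lt_self 1 (exp_pos _)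

theorem tendsto_expClock_atTop : Tendsto expClock atTop (𝓝 1) :=
  sub_zero (1 : ℝ) ▸ tendsto_exp_neg_atTop_nhds_zero.const_sub 1

theorem neg_log_one_sub_mem_Icc {y z : ℝ} (ht : t ∈ Icc (expClock y) (expClock z)) :
    -log (1 - t) ∈ Icc y z := by
  have ht1 : 0 < 1 - t := sub_pos.2 (ht.2.trans_lt (expClock_lt_one z))
  refine ⟨le_neg.2 ((log_le_iff_le_exp ht1).2 (sub_le_comm.1 ht.1)),
    neg_le.2 ((le_log_iff_exp_le ht1).2 (le_sub_comm.1 ht.2))⟩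

theorem exists_contDiff_exp_le_eqOn_plateaus {a : ℕ → ℝ} (ha : ∀ n : ℕ, rexp (n + 1 / 2) < a n) :
    ∃ P : ℝ → ℝ, ContDiff ℝ ∞ P ∧ (∀ y, rexp y ≤ P y) ∧
      ∀ n : ℕ, ∀ y ∈ Icc (n : ℝ) (n + 1 / 2), P y = a n := by
  refine exists_contDiff_ge_eqOn_const_of_locallyFinite (fun _ => isClosed_Icc)
    (locallyFinite_Icc_of_tendsto_atTop ?_) (fun m n hmn => ?_) continuous_exp
    fun n y hy => (exp_le_exp.2 hy.2).trans_lt (ha n)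
  · rw [Nat.cofinite_eq_atTop]
    exact tendsto_natCast_atTop_atTop
  · wlog hlt : m < n generalizing m n
    · exact (this n m hmn.symm (hmn.lt_or_gt.resolve_left hlt)).symm
    refine disjoint_left.2 fun y hm hn => ?_
    have : (m : ℝ) + 1 ≤ n := mod_cast hlt
    linarith [hm.2, hn.1]

theorem exists_timeChange_of_speed_on_plateaus (A : ℕ → ℝ) : ∃ σ : ℝ → ℝ,
    ContDiffOn ℝ ∞ σ (Ico 0 1) ∧ StrictMonoOn σ (Ico 0 1) ∧ BijOn σ (Ico 0 1) (Ici 0) ∧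
      ∀ n : ℕ, ∃ a ≥ A n, 0 < a ∧
        ∀ t ∈ Icc (expClock n) (expClock (n + 1 / 2)), HasDerivAt σ a t := by
  let a : ℕ → ℝ := fun n => max (A n) (rexp (n + 1 / 2) + 1)
  have ha : ∀ n : ℕ, rexp (n + 1 / 2) < a n := fun n => (lt_add_one _).trans_le (le_max_right _ _)
  obtain ⟨P, hP, hPexp, hPa⟩ := exists_contDiff_exp_le_eqOn_plateaus ha
  let ρ : ℝ → ℝ := fun t => P (-log (1 - t))
  have hρ : ContDiffOn ℝ ∞ ρ (Iio 1) := hP.comp_contDiffOn <|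
    (ContDiffOn.log (by fun_prop) fun t ht => (sub_pos.2 ht).ne').neg
  have hρ_ge : ∀ t < 1, (1 - t)⁻¹ ≤ ρ t := fun t ht => by
    simpa [exp_neg, exp_log (sub_pos.2 ht)] using hPexp (-log (1 - t))
  let σ : ℝ → ℝ := fun t => ∫ r in (0 : ℝ)..t, ρ r
  have hσ : ∀ t < 1, HasDerivAt σ (ρ t) t := fun t ht =>
    hasDerivAt_integral_of_continuousOn_Iio hρ.continuousOn one_pos ht
  have hσ0 : σ 0 = 0 := intervalIntegral.integral_same
  have hmono : StrictMonoOn σ (Ico 0 1) :=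
    (strictMonoOn_Iio_of_hasDerivAt hσ fun t ht =>
      (inv_pos.2 (sub_pos.2 ht)).trans_le (hρ_ge t ht)).mono Ico_subset_Iio_self
  have hmaps : MapsTo σ (Ico 0 1) (Ici 0) := fun t ht =>
    hσ0.ge.trans (hmono.monotoneOn (left_mem_Ico.2 one_pos) ht ht.1)
  have hsurj : SurjOn σ (Ico 0 1) (Ici 0) := by
    simpa only [hσ0] using surjOn_Ico_Ici_of_hasDerivAt one_pos hσ hρ_ge
  refine ⟨σ, (contDiffOn_infty_Iio_of_hasDerivAt hσ hρ).mono Ico_subset_Iio_self, hmono,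
    ⟨hmaps, hmono.injOn, hsurj⟩, fun n =>
    ⟨a n, le_max_left _ _, (exp_pos _).trans (ha n), fun t ht => ?_⟩⟩
  rw [← hPa n _ (neg_log_one_sub_mem_Icc ht)]
  exact hσ t (ht.2.trans_lt (expClock_lt_one _))

end TimeChange

/-! ### Decay of accelerated flows -/

theorem tendsto_nhdsLT_zero_of_antitoneOn_of_le_mul {f : ℝ → ℝ} {α : ℕ → ℝ} {s b c : ℝ}
    (hf : AntitoneOn f (Ico s b)) (hf0 : ∀ t, 0 ≤ f t) (hc0 : 0 ≤ c) (hc1 : c < 1)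
    (hα : ∀ᶠ n in atTop, α n ∈ Ico s b) (hstep : ∀ᶠ n in atTop, f (α (n + 1)) ≤ c * f (α n)) :
    Tendsto f (𝓝[<] b) (𝓝 0) := by
  obtain ⟨N, hN⟩ := eventually_atTop.1 (hα.and hstep)
  have hgeom : ∀ k, f (α (N + k)) ≤ c ^ k * f (α N) := fun k =>
    le_geom (u := fun k => f (α (N + k))) hc0 k fun j _ => (hN (N + j) (N.le_add_right j)).2
  have hlim : Tendsto (fun k => c ^ k * f (α N)) atTop (𝓝 0) := by
    simpa only [zero_mul] using (tendsto_pow_atTop_nhds_zero_of_lt_one hc0 hc1).mul_const (f (α N))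
  refine tendsto_order.2 ⟨fun ε hε => Eventually.of_forall fun t => hε.trans_le (hf0 t),
    fun ε hε => ?_⟩
  obtain ⟨k, hk⟩ := (hlim.eventually_lt_const hε).exists
  have hmem := (hN (N + k) (N.le_add_right k)).1
  filter_upwards [Ioo_mem_nhdsLT hmem.2] with t ht
  exact (hf hmem ⟨hmem.1.trans ht.1.le, ht.2⟩ ht.1.le).trans_lt ((hgeom k).trans_lt hk)

theorem eventually_forall_Icc_div_le {τ : ℝ → ℝ}
    (hτ : Tendsto (fun ν => ν * τ ν) (𝓝[>] 0) (𝓝 0)) {m ε : ℝ} (hm : 0 < m) (hε : 0 < ε) (M : ℝ) :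
    ∀ᶠ a in atTop, ∀ ν ∈ Icc m M, τ (ν / a) / a ≤ ε := by
  obtain ⟨δ, hδ, hlt⟩ := mem_nhdsGT_iff_exists_Ioo_subset.1
    (hτ.eventually_lt_const (mul_pos hε hm))
  have hsmall : ∀ᶠ a in atTop, M / a < δ :=
    (tendsto_const_nhds.div_atTop tendsto_id).eventually_lt_const hδ
  filter_upwards [hsmall, eventually_gt_atTop 0] with a haδ ha ν hν
  have hν0 : 0 < ν := hm.trans_le hν.1
  have hmem : ν / a ∈ Ioo 0 δ :=
    ⟨div_pos hν0 ha, (div_le_div_of_nonneg_right hν.2 ha.le).trans_lt haδ⟩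
  calc τ (ν / a) / a = ν / a * τ (ν / a) / ν := by field_simp
    _ ≤ ε * m / ν := div_le_div_of_nonneg_right (hlt hmem).le hν0.le
    _ ≤ ε := div_le_of_le_mul₀ hν0.le hε.le (mul_le_mul_of_nonneg_left hν.1 hε.le)

theorem eq_add_mul_sub_of_hasDerivAt_Icc {f : ℝ → ℝ} {a α β : ℝ}
    (hf : ∀ t ∈ Icc α β, HasDerivAt f a t) {t : ℝ} (ht : t ∈ Icc α β) :
    f t = f α + a * (t - α) := by
  refine eq_of_has_deriv_right_eq (g := fun t => f α + a * (t - α)) (f' := fun _ => a)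
    (fun r hr => (hf r (Ico_subset_Icc_self hr)).hasDerivWithinAt) (fun r _ => ?_)
    (fun r hr => (hf r hr).continuousAt.continuousWithinAt) (by fun_prop) (by simp) t ht
  simpa using ((((hasDerivAt_id r).sub_const α).const_mul a).const_add (f α)).hasDerivWithinAt

section Acceleration

variable {d : ℕ} {I J : Set ℝ} {κ ν a α β s : ℝ} {u v w : ℝ → (Fin d → ℝ) → Fin d → ℝ}
  {θ η : ℝ → (Fin d → ℝ) → ℝ} {σ τ : ℝ → ℝ}

/-- The flow `u` is relaxation enhancing with relaxation times `τ`: every mean-zero solution with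
viscosity `κ` loses half of its `L²` norm within time `τ κ`, whatever its starting time `s ≥ 0`. -/
def RelaxationEnhancing (u : ℝ → (Fin d → ℝ) → Fin d → ℝ) (τ : ℝ → ℝ) : Prop :=
  ∀ κ > 0, ∀ s ≥ 0, ∀ θ, IsAdvectionDiffusion (Ici s) κ u θ →
    (∀ t ∈ Ici s, ∫ x in Icc 0 1, θ t x = 0) →
    L2norm d (θ (s + τ κ)) ≤ 1 / 2 * L2norm d (θ s)

/-- The flow `u` run along the clock `σ`, the paper's `u_σ`. -/
noncomputable def acceleratedFlow (σ : ℝ → ℝ) (u : ℝ → (Fin d → ℝ) → Fin d → ℝ) :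
    ℝ → (Fin d → ℝ) → Fin d → ℝ :=
  fun t x => deriv σ t • u (σ t) x

theorem advection_const_smul (c : ℝ) (v : (Fin d → ℝ) → Fin d → ℝ) (f : (Fin d → ℝ) → ℝ)
    (x : Fin d → ℝ) : advection (fun x => c • v x) f x = c * advection v f x := by
  simp only [advection, Finset.mul_sum, Pi.smul_apply, smul_eq_mul, mul_assoc]

namespace IsAdvectionDiffusion

theorem congr_field (h : IsAdvectionDiffusion I κ v θ) (hvw : EqOn v w I) :
    IsAdvectionDiffusion I κ w θ where
  contDiffOnSlab := h.contDiffOnSlab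
  periodic := h.periodic
  equation t ht := hvw ht ▸ h.equation t ht

theorem comp_time (h : IsAdvectionDiffusion I κ v θ) {φ : ℝ → ℝ} {c : ℝ}
    (hφ : ∀ r, HasDerivAt φ c r) (hφI : MapsTo φ J I) (hJ : UniqueDiffOn ℝ J) :
    IsAdvectionDiffusion J (c * κ) (fun r x => c • v (φ r) x) fun r => θ (φ r) where
  contDiffOnSlab := h.contDiffOnSlab.comp_time
    (contDiff_infty_iff_deriv.2 ⟨fun r => (hφ r).differentiableAt, by
      rw [funext fun r => (hφ r).deriv]; exact contDiff_const⟩).contDiffOn hφI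
  periodic r hr := h.periodic _ (hφI hr)
  equation r hr x := by
    have hderiv : HasDerivWithinAt (fun r => θ (φ r) x) _ J r :=
      (h.contDiffOnSlab.differentiableWithinAt_time (by simp) (hφI hr) x).hasDerivWithinAt.comp r
        (hφ r).hasDerivWithinAt hφI
    rw [hderiv.derivWithin (hJ r hr), h.derivWithin_eq (hφI hr) x, advection_const_smul]
    ring

theorem antitoneOn_L2norm_acceleratedFlow
    (h : IsAdvectionDiffusion I κ (acceleratedFlow σ u) θ) (hI : I.OrdConnected) (hκ : 0 ≤ κ)
    (hu : ∀ t ∈ I, IncompressibleField (u (σ t))) : AntitoneOn (fun t => L2norm d (θ t)) I := by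
  intro p hp q hq hpq
  rcases hpq.eq_or_lt with rfl | hlt
  · exact le_rfl
  have hsub : Icc p q ⊆ I := hI.out hp hq
  have hIu : UniqueDiffOn ℝ (Icc p q) := uniqueDiffOn_Icc hlt
  exact (h.mono hsub hIu).antitoneOn_L2norm (convex_Icc p q) isClosed_Icc hIu hκ
    (fun t ht => (hu t (hsub ht)).const_smul (deriv σ t)) (left_mem_Icc.2 hpq)
    (right_mem_Icc.2 hpq) hpq

theorem comp_plateau (h : IsAdvectionDiffusion (Icc α β) κ (acceleratedFlow σ u) θ) (ha : 0 < a)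
    (hαβ : α < β) (hσ : ∀ t ∈ Icc α β, HasDerivAt σ a t) :
    IsAdvectionDiffusion (Icc (σ α) (σ α + a * (β - α))) (κ / a) u
      fun r => θ (α + (r - σ α) / a) := by
  have hmaps : MapsTo (fun r => α + (r - σ α) / a) (Icc (σ α) (σ α + a * (β - α))) (Icc α β) :=
    fun r hr => ⟨le_add_of_nonneg_right (div_nonneg (sub_nonneg.2 hr.1) ha.le), by
      have : (r - σ α) / a ≤ β - α := by
        rw [div_le_iff₀ ha]; linarith [hr.2]
      linarith⟩
  have hφ : ∀ r, HasDerivAt (fun r => α + (r - σ α) / a) (1 / a) r := fun r =>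
    (((hasDerivAt_id r).sub_const _).div_const a).const_add α
  rw [div_eq_inv_mul, ← one_div]
  refine (h.comp_time hφ hmaps ?_).congr_field fun r hr => ?_
  · exact uniqueDiffOn_Icc (lt_add_of_pos_right _ (mul_pos ha (sub_pos.2 hαβ)))
  · have hclock : σ (α + (r - σ α) / a) = r := by
      rw [eq_add_mul_sub_of_hasDerivAt_Icc hσ (hmaps hr)]
      field_simp
      ring
    funext x
    simp only [acceleratedFlow, (hσ _ (hmaps hr)).deriv, hclock, smul_smul,
      one_div_mul_cancel ha.ne', one_smul]

end IsAdvectionDiffusion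

namespace RelaxationEnhancing

-- The hypothesis speaks of solutions for all later times, so the local solution is first extended
-- by solving the initial value problem from its value at time `s`.
theorem L2norm_le_half (hτ : RelaxationEnhancing u τ) (hu : ContDiffOnSlab ∞ (Ici 0) u)
    (hinc : ∀ t ∈ Ici 0, IncompressibleField (u t)) (hκ : 0 < κ) (hs : 0 ≤ s) (hτκ : 0 < τ κ)
    (hη : IsAdvectionDiffusion (Icc s (s + τ κ)) κ u η) (hmean : ∫ x in Icc 0 1, η s x = 0) :
    L2norm d (η (s + τ κ)) ≤ 1 / 2 * L2norm d (η s) := by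
  have hlt : s < s + τ κ := lt_add_of_pos_right s hτκ
  have hsub : Ici s ⊆ Ici 0 := Ici_subset_Ici.2 hs
  have hstart : s ∈ Icc s (s + τ κ) := left_mem_Icc.2 hlt.le
  obtain ⟨ζ, hζ, hζs⟩ := exists_isAdvectionDiffusion hκ (hu.mono hsub)
    (fun t ht => (hinc t (hsub ht)).periodic) (hη.contDiffOnSlab.contDiff_slice hstart)
    (hη.periodic s hstart)
  have hζmean : ∀ t ∈ Ici s, ∫ x in Icc 0 1, ζ t x = 0 := fun t ht => by
    rw [hζ.integral_eq (convex_Ici s) isClosed_Ici (uniqueDiffOn_Ici s)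
      (fun t ht => hinc t (hsub ht)) self_mem_Ici ht, hζs, hmean]
  have hunique : η (s + τ κ) = ζ (s + τ κ) :=
    hη.eq_of_eq (hζ.mono Icc_subset_Ici_self (uniqueDiffOn_Icc hlt)) (convex_Icc _ _) isClosed_Icc
      (uniqueDiffOn_Icc hlt) hκ.le (fun t ht => hinc t (hs.trans ht.1)) hstart
      (right_mem_Icc.2 hlt.le) hlt.le hζs.symm
  rw [hunique, ← hζs]
  exact hτ κ hκ s hs ζ hζ hζmean

theorem L2norm_le_half_of_plateau (hτ : RelaxationEnhancing u τ)
    (hu : ContDiffOnSlab ∞ (Ici 0) u) (hinc : ∀ t ∈ Ici 0, IncompressibleField (u t))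
    (hν : 0 < ν) (ha : 0 < a) (hτν : 0 < τ (ν / a)) (hle : τ (ν / a) / a ≤ β - α)
    (hσ : ∀ t ∈ Icc α β, HasDerivAt σ a t) (hσ0 : 0 ≤ σ α)
    (hθ : IsAdvectionDiffusion (Icc α β) ν (acceleratedFlow σ u) θ)
    (hmean : ∫ x in Icc 0 1, θ α x = 0) :
    L2norm d (θ (α + τ (ν / a) / a)) ≤ 1 / 2 * L2norm d (θ α) := by
  have hlen : 0 < τ (ν / a) / a := div_pos hτν ha
  have hτle : τ (ν / a) ≤ a * (β - α) := by rwa [div_le_iff₀' ha] at hle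
  have hη := (hθ.comp_plateau ha (sub_pos.1 (hlen.trans_le hle)) hσ).mono
    (Icc_subset_Icc_right (add_le_add_right hτle (σ α)))
    (uniqueDiffOn_Icc (lt_add_of_pos_right _ hτν))
  simpa using hτ.L2norm_le_half hu hinc (div_pos hν ha) hσ0 hτν hη (by simpa using hmean)

theorem tendsto_L2norm_acceleratedFlow (hτ : RelaxationEnhancing u τ)
    (hu : ContDiffOnSlab ∞ (Ici 0) u) (hinc : ∀ t ∈ Ici 0, IncompressibleField (u t))
    (hτ0 : ∀ κ > 0, 0 < τ κ) (hν : 0 < ν) (hσ : MapsTo σ (Ico 0 1) (Ici 0)) (hs : s ∈ Ico 0 1)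
    (hplateau : ∀ᶠ n : ℕ in atTop, ∃ a > 0,
      (∀ t ∈ Icc (expClock n) (expClock (n + 1 / 2)), HasDerivAt σ a t) ∧
        τ (ν / a) / a ≤ expClock (n + 1 / 2) - expClock n)
    (hθ : IsAdvectionDiffusion (Ico s 1) ν (acceleratedFlow σ u) θ)
    (hmean : ∀ t ∈ Ico s 1, ∫ x in Icc 0 1, θ t x = 0) :
    Tendsto (fun t => L2norm d (θ t)) (𝓝[<] 1) (𝓝 0) := by
  have hσs : ∀ t ∈ Ico s 1, σ t ∈ Ici 0 := fun t ht => hσ ⟨hs.1.trans ht.1, ht.2⟩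
  have hanti : AntitoneOn (fun t => L2norm d (θ t)) (Ico s 1) :=
    hθ.antitoneOn_L2norm_acceleratedFlow ordConnected_Ico hν.le fun t ht => hinc _ (hσs t ht)
  have hmem : ∀ᶠ n : ℕ in atTop, expClock n ∈ Ico s 1 :=
    ((tendsto_expClock_atTop.comp tendsto_natCast_atTop_atTop).eventually_const_le hs.2).mono
      fun n hn => ⟨hn, expClock_lt_one n⟩
  refine tendsto_nhdsLT_zero_of_antitoneOn_of_le_mul hanti (fun _ => sqrt_nonneg _)
    one_half_pos.le one_half_lt_one hmem ?_
  filter_upwards [hmem, hplateau] with n hn ⟨a, ha, hσa, hle⟩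
  have hlen : 0 < τ (ν / a) / a := div_pos (hτ0 _ (div_pos hν ha)) ha
  have hstart_lt : expClock n < expClock (n + 1 / 2) := expClock_strictMono (by linarith)
  have hend_lt : expClock (n + 1 / 2) < expClock (n + 1 : ℕ) :=
    expClock_strictMono (by push_cast; linarith)
  have hθn := hθ.mono (fun t ht => ⟨hn.1.trans ht.1, ht.2.trans_lt (expClock_lt_one _)⟩)
    (uniqueDiffOn_Icc hstart_lt)
  have hnext : expClock (n + 1 : ℕ) ∈ Ico s 1 :=
    ⟨hn.1.trans (hstart_lt.trans hend_lt).le, expClock_lt_one _⟩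
  have hhalf_time : expClock n + τ (ν / a) / a ≤ expClock (n + 1 : ℕ) := by linarith
  exact (hanti ⟨by linarith [hn.1], hhalf_time.trans_lt hnext.2⟩ hnext hhalf_time).trans <|
    hτ.L2norm_le_half_of_plateau hu hinc hν ha (hτ0 _ (div_pos hν ha)) hle hσa (hσs _ hn) hθn
      (hmean _ hn)

end RelaxationEnhancing

end Acceleration

/-- Accelerated relaxation enhancing flows cause total dissipation. -/
theorem accelerated_relaxation_enhancing_total_dissipation
    (d : ℕ) (hd : 1 ≤ d)
    (u : ℝ → (Fin d → ℝ) → (Fin d → ℝ))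
    (hu_smooth : ContDiffOn ℝ (⊤ : ℕ∞) (fun p : ℝ × (Fin d → ℝ) => u p.1 p.2)
      (Set.Ici (0:ℝ) ×ˢ Set.univ))
    (hu_per : ∀ t ∈ Set.Ici (0:ℝ), ∀ i : Fin d, PeriodicIn d (fun x => u t x i))
    (hu_bdd : ∀ T > (0:ℝ), ∃ M : ℝ, ∀ t ∈ Set.Icc (0:ℝ) T, ∀ x, ‖u t x‖ ≤ M)
    (hu_div : ∀ t ∈ Set.Ici (0:ℝ), ∀ x, ∑ i, pd d i (fun y => u t y i) x = 0)
    (τ : ℝ → ℝ) (hτ_pos : ∀ ν > (0:ℝ), 0 < τ ν)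
    (hτ_lim : Tendsto (fun ν => ν * τ ν) (nhdsWithin 0 (Set.Ioi 0)) (nhds 0))
    (hRE : ∀ ν > (0:ℝ), ∀ s ≥ (0:ℝ), ∀ θ : ℝ → (Fin d → ℝ) → ℝ,
      ContDiffOn ℝ (⊤ : ℕ∞) (fun p : ℝ × (Fin d → ℝ) => θ p.1 p.2) (Set.Ici s ×ˢ Set.univ) →
      (∀ t ∈ Set.Ici s, PeriodicIn d (θ t)) →
      (∀ t ∈ Set.Ici s, ∫ x in Set.Icc (0 : Fin d → ℝ) 1, θ t x = 0) →
      (∀ t ∈ Set.Ici s, ∀ x,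
        derivWithin (fun r => θ r x) (Set.Ici s) t - ν * lap d (θ t) x
          + ∑ i, u t x i * pd d i (θ t) x = 0) →
      L2norm d (θ (s + τ ν)) ≤ (1/2) * L2norm d (θ s)) :
    ∃ σ : ℝ → ℝ,
      ContDiffOn ℝ (⊤ : ℕ∞) σ (Set.Ico 0 1) ∧
      StrictMonoOn σ (Set.Ico 0 1) ∧
      Set.BijOn σ (Set.Ico 0 1) (Set.Ici 0) ∧
      ∀ ν > (0:ℝ), ∀ s ∈ Set.Ico (0:ℝ) 1, ∀ θ : ℝ → (Fin d → ℝ) → ℝ,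
        ContDiffOn ℝ (⊤ : ℕ∞) (fun p : ℝ × (Fin d → ℝ) => θ p.1 p.2) (Set.Ico s 1 ×ˢ Set.univ) →
        (∀ t ∈ Set.Ico s 1, PeriodicIn d (θ t)) →
        (∀ t ∈ Set.Ico s 1, ∫ x in Set.Icc (0 : Fin d → ℝ) 1, θ t x = 0) →
        (∀ t ∈ Set.Ico s 1, ∀ x,
          derivWithin (fun r => θ r x) (Set.Ico s 1) t - ν * lap d (θ t) x
            + ∑ i, (deriv σ t * u (σ t) x i) * pd d i (θ t) x = 0) →
        Tendsto (fun t => L2norm d (θ t)) (nhdsWithin 1 (Set.Iio 1)) (nhds 0) := by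
  have hu : ContDiffOnSlab ∞ (Ici 0) u := hu_smooth
  have hinc : ∀ t ∈ Ici 0, IncompressibleField (u t) := fun t ht =>
    ⟨(hu.contDiff_slice ht).of_le (by norm_cast), hu_per t ht, hu_div t ht⟩
  have hτ : RelaxationEnhancing u τ := fun κ hκ s hs θ hθ hmean =>
    hRE κ hκ s hs θ hθ.contDiffOnSlab hθ.periodic hmean hθ.equation
  have hspeed (n : ℕ) := eventually_atTop.1 <| eventually_forall_Icc_div_le hτ_lim
    (Nat.one_div_pos_of_nat (n := n))
    (sub_pos.2 (expClock_strictMono (lt_add_of_pos_right (n : ℝ) one_half_pos))) n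
  choose A hA using hspeed
  obtain ⟨σ, hσ, hmono, hbij, hplateau⟩ := exists_timeChange_of_speed_on_plateaus A
  refine ⟨σ, hσ, hmono, hbij, fun ν hν s hs θ hθ hper hmean heq => ?_⟩
  have hsol : IsAdvectionDiffusion (Ico s 1) ν (acceleratedFlow σ u) θ := ⟨hθ, hper, heq⟩
  refine hτ.tendsto_L2norm_acceleratedFlow hu hinc hτ_pos hν hbij.mapsTo hs ?_ hsol hmean
  filter_upwards [tendsto_one_div_add_atTop_nhds_zero_nat.eventually_le_const hν,
    tendsto_natCast_atTop_atTop.eventually_ge_atTop ν] with n hn_ge hn_le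
  obtain ⟨a, haA, ha, hσa⟩ := hplateau n
  exact ⟨a, ha, hσa, hA n a haA ν ⟨hn_ge, hn_le⟩⟩
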